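/- Let Γ be an n-rose labeled graph with all labels positive such that either (a) exactly one pair {e, ē} of edges of Γ is mobile, or (b) n ≤ 3. Suppose Γ contains a strict monotone cycle, and let Γ′ be a reduced labeled graph obtained from Γ by a finite sequence of slide, induction and A^{±1}-moves with all intermediate labeled graphs reduced. Then Γ′ contains a strict monotone cycle. -/

import Mathlib

/-! Labeled graphs in the sense of generalized Baumslag–Solitar theory. -/

structure LGraph (V E : Type) where
  o : E → V
  bar : E → E
  bar_bar : ∀ e, bar (bar e) = e
  bar_ne : ∀ e, bar e ≠ e
  lab : E → ℤ

namespace LGraph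

variable {V E V' E' : Type}

/-- Terminal vertex of an oriented edge. -/
def t (G : LGraph V E) (e : E) : V := G.o (G.bar e)

/-- All labels are positive. -/
def Positive (G : LGraph V E) : Prop := ∀ e : E, 0 < G.lab e

/-- No collapsible edge: every label-1 edge is a loop. -/
def Reduced (G : LGraph V E) : Prop := ∀ e : E, G.lab e = 1 → G.o e = G.t e

/-- An `n`-rose: one vertex and `n` pairs of oriented edges. -/
def IsRose (G : LGraph V E) (n : ℕ) : Prop :=
  Nat.card V = 1 ∧ Nat.card E = 2 * n

/-- Modulus of a single oriented edge: `λ(ē)/λ(e)`. -/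
def qe (G : LGraph V E) (e : E) : ℚ := (G.lab (G.bar e) : ℚ) / (G.lab e : ℚ)

/-- Modulus of an edge path. -/
def q (G : LGraph V E) (l : List E) : ℚ := (l.map G.qe).prod

/-- Consecutive edges match up. -/
def IsEdgePath (G : LGraph V E) (l : List E) : Prop :=
  List.Chain' (fun a b => G.t a = G.o b) l

/-- An `e`-edge path. -/
def IsEEdgePath (G : LGraph V E) (e : E) (l : List E) : Prop :=
  G.IsEdgePath l ∧
  (∀ a ∈ l, a ≠ e ∧ a ≠ G.bar e) ∧
  (∀ a ∈ l.head?, G.o a = G.o e) ∧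
  ∀ i : Fin l.length, ∃ k : ℤ,
    (G.lab e : ℚ) * G.q (l.take i.1) = (k : ℚ) * (G.lab (l.get i) : ℚ)

/-- A monotone cycle `(e₁,…,eₛ,e)`. -/
def IsMonotoneCycle (G : LGraph V E) (l : List E) (e : E) : Prop :=
  G.IsEEdgePath (G.bar e) l ∧
  G.t (l.getLastD e) = G.o e ∧
  ∃ k : ℤ, G.q (l ++ [e]) = (k : ℚ)

/-- A strict monotone cycle. -/
def IsStrictMonotoneCycle (G : LGraph V E) (l : List E) (e : E) : Prop :=
  G.IsMonotoneCycle l e ∧ G.q (l ++ [e]) ≠ 1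

def HasStrictMonotoneCycle (G : LGraph V E) : Prop :=
  ∃ (l : List E) (e : E), G.IsStrictMonotoneCycle l e

/-- A strict `e`-integer cycle. -/
def IsStrictIntegerCycle (G : LGraph V E) (e : E) (l : List E) : Prop :=
  G.IsEEdgePath e l ∧ l ≠ [] ∧
  G.t (l.getLastD e) = G.o (l.headD e) ∧
  (∃ k : ℤ, G.q l = (k : ℚ)) ∧ G.q l ≠ 1

/-- A mobile edge. -/
def Mobile (G : LGraph V E) (e : E) : Prop :=
  (∃ l, G.IsStrictMonotoneCycle l e ∨ G.IsStrictMonotoneCycle l (G.bar e)) ∨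
  (∃ l, G.IsStrictIntegerCycle e l ∨ G.IsStrictIntegerCycle (G.bar e) l)

/-- The single slide of `e` over `f` is permitted. -/
def CanSlide (G : LGraph V E) (e f : E) : Prop :=
  f ≠ e ∧ f ≠ G.bar e ∧ G.o f = G.o e ∧ G.lab f ∣ G.lab e

open Classical in
/-- The result of the single slide of `e` over `f`. -/
noncomputable def slide (G : LGraph V E) (e f : E) : LGraph V E where
  o := fun x => if x = e then G.t f else G.o x
  bar := G.bar
  bar_bar := G.bar_bar
  bar_ne := G.bar_ne
  lab := fun x => if x = e then G.lab e * G.lab (G.bar f) / G.lab f else G.lab x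

/-- Successively slide `e` over the edges of a path. -/
noncomputable def slidePath : LGraph V E → E → List E → LGraph V E
  | G, _, [] => G
  | G, e, f :: l => slidePath (G.slide e f) e l

/-- Each single slide in the successive slide of `e` over a path is permitted. -/
def CanSlidePath : LGraph V E → E → List E → Prop
  | _, _, [] => True
  | G, e, f :: l => G.CanSlide e f ∧ CanSlidePath (G.slide e f) e l

/-- Each single slide is permitted and each intermediate graph is reduced. -/
def GoodSlidePath : LGraph V E → E → List E → Prop
  | _, _, [] => True
  | G, e, f :: l => G.CanSlide e f ∧ (G.slide e f).Reduced ∧ GoodSlidePath (G.slide e f) e l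

/-- Perform a finite sequence of single slides, given as pairs (slid edge, edge slid over). -/
noncomputable def slideSeq : LGraph V E → List (E × E) → LGraph V E
  | G, [] => G
  | G, p :: rest => slideSeq (G.slide p.1 p.2) rest

/-- A sequence of permitted single slides, each sliding a mobile edge. -/
def MobileSlideSeq : LGraph V E → List (E × E) → Prop
  | _, [] => True
  | G, p :: rest => G.Mobile p.1 ∧ G.CanSlide p.1 p.2 ∧ MobileSlideSeq (G.slide p.1 p.2) rest

/-- Isomorphism of labeled graphs. -/
def Isom (G : LGraph V E) (G' : LGraph V' E') : Prop :=
  ∃ (φ : V → V') (Φ : E → E'),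
    Function.Bijective φ ∧ Function.Bijective Φ ∧
    (∀ x, G'.o (Φ x) = φ (G.o x)) ∧
    (∀ x, G'.bar (Φ x) = Φ (G.bar x)) ∧
    (∀ x, G'.lab (Φ x) = G.lab x)

open Classical in
/-- The result of the induction move at the loop `e` with multiplier `m`. -/
noncomputable def inductionMove (G : LGraph V E) (e : E) (m : ℤ) : LGraph V E where
  o := G.o
  bar := G.bar
  bar_bar := G.bar_bar
  bar_ne := G.bar_ne
  lab := fun x => if x ≠ e ∧ x ≠ G.bar e ∧ G.o x = G.o e then m * G.lab x else G.lab x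

/-- `G'` is obtained from `G` by a single slide move (up to isomorphism). -/
def IsSlideMove (G : LGraph V E) (G' : LGraph V' E') : Prop :=
  ∃ e f, G.CanSlide e f ∧ Isom G' (G.slide e f)

/-- `G'` is obtained from `G` by a (forward) induction move. -/
def IsInductionMove (G : LGraph V E) (G' : LGraph V' E') : Prop :=
  ∃ (e : E) (m : ℤ), G.o e = G.t e ∧ G.lab e = 1 ∧ 1 ≤ m ∧ m ∣ G.lab (G.bar e) ∧
    Isom G' (G.inductionMove e m)

/-- `G'` is obtained from `G` by an A-move. -/
def IsAMove (G : LGraph V E) (G' : LGraph V' E') : Prop :=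
  ∃ (e d : E) (e' : E') (φ : V → V') (Φ : E → E'),
    G.o e = G.t e ∧ G.lab e = 1 ∧ G.lab (G.bar e) ≠ 1 ∧
    G.o d = G.o e ∧ G.t d ≠ G.o e ∧
    G.lab d ≠ 1 ∧ G.lab (G.bar d) ≠ 1 ∧ G.lab d ∣ G.lab (G.bar e) ∧
    (∀ x : E, G.o x = G.o e → x = e ∨ x = G.bar e ∨ x = d) ∧
    G'.o e' = φ (G.t d) ∧ G'.t e' = φ (G.t d) ∧
    G'.lab e' = G.lab (G.bar d) ∧
    G'.lab (G'.bar e') = G.lab (G.bar d) * G.lab (G.bar e) ∧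
    (∀ w₁ w₂ : V, w₁ ≠ G.o e → w₂ ≠ G.o e → φ w₁ = φ w₂ → w₁ = w₂) ∧
    (∀ v' : V', ∃ w : V, w ≠ G.o e ∧ φ w = v') ∧
    (∀ x : E, x ≠ e → x ≠ G.bar e → x ≠ d → x ≠ G.bar d →
      Φ x ≠ e' ∧ Φ x ≠ G'.bar e' ∧
      G'.o (Φ x) = φ (G.o x) ∧ G'.bar (Φ x) = Φ (G.bar x) ∧ G'.lab (Φ x) = G.lab x) ∧
    (∀ x y : E, x ≠ e → x ≠ G.bar e → x ≠ d → x ≠ G.bar d →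
      y ≠ e → y ≠ G.bar e → y ≠ d → y ≠ G.bar d → Φ x = Φ y → x = y) ∧
    (∀ y : E', y ≠ e' → y ≠ G'.bar e' →
      ∃ x : E, x ≠ e ∧ x ≠ G.bar e ∧ x ≠ d ∧ x ≠ G.bar d ∧ Φ x = y)

/-- A strict ascending loop: a loop with `λ(e) = 1 ≠ λ(ē)`. -/
def HasStrictAscendingLoop (G : LGraph V E) : Prop :=
  ∃ e : E, G.o e = G.t e ∧ G.lab e = 1 ∧ G.lab (G.bar e) ≠ 1

end LGraph

/-- A labeled graph with its vertex and edge types bundled. -/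
structure BGraph where
  V : Type
  E : Type
  G : LGraph V E

/-- An elementary deformation move: a slide, an induction move or its inverse,
or an A-move or its inverse. -/
def BGraph.ElemMove (X Y : BGraph) : Prop :=
  LGraph.IsSlideMove X.G Y.G ∨ LGraph.IsInductionMove X.G Y.G ∨
  LGraph.IsInductionMove Y.G X.G ∨ LGraph.IsAMove X.G Y.G ∨ LGraph.IsAMove Y.G X.G

/-- A finite sequence of elementary moves with all intermediate graphs reduced. -/
def BGraph.MoveSeq : BGraph → BGraph → Prop :=
  Relation.ReflTransGen (fun X Y => X.ElemMove Y ∧ Y.G.Reduced)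

/-- A reduced labeled graph is non-ascending if no reduced labeled graph obtained from it
by slide, induction and A-moves (all intermediate graphs reduced) contains a
strict ascending loop. -/
def LGraph.NonAscending {V E : Type} (G : LGraph V E) : Prop :=
  ∀ Y : BGraph, BGraph.MoveSeq ⟨V, E, G⟩ Y → ¬ Y.G.HasStrictAscendingLoop

/-- Auxiliary: labeled graphs with labels in the positive naturals. -/
structure PG (V E : Type) where
  o : E → V
  bar : E → E
  bar_bar : ∀ e, bar (bar e) = e
  bar_ne : ∀ e, bar e ≠ e
  L : E → ℕ+

namespace PG

/-- Scaling of a point. -/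
def sm {V : Type} (k : ℕ+) (p : V × ℕ+) : V × ℕ+ := (p.1, k * p.2)

section basic
variable {V E : Type}

theorem sm_sm (a b : ℕ+) (p : V × ℕ+) : sm a (sm b p) = sm (a * b) p := by
  simp [sm, mul_assoc]

theorem sm_one (p : V × ℕ+) : sm 1 p = p := by simp [sm]

theorem sm_inj {a b : ℕ+} {p : V × ℕ+} (h : sm a p = sm b p) : a = b := by
  simpa [sm] using h

theorem sm_cancel {a : ℕ+} {p q : V × ℕ+} (h : sm a p = sm a q) : p = q := by
  simp only [sm, Prod.mk.injEq, mul_right_inj] at h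
  exact Prod.ext h.1 h.2

theorem pmul_eq_one {a b : ℕ+} (h : a * b = 1) : a = 1 ∧ b = 1 := by
  have h2 : (a : ℕ) * b = 1 := by exact_mod_cast congrArg PNat.val h
  have h3 := Nat.eq_one_of_dvd_one (Dvd.intro _ h2)
  have h4 := Nat.eq_one_of_dvd_one (Dvd.intro_left _ h2)
  exact ⟨PNat.coe_inj.1 h3, PNat.coe_inj.1 h4⟩

variable (G : PG V E)

/-- The point attached to an oriented edge. -/
def x (e : E) : V × ℕ+ := (G.o e, G.L e)

/-- One crossing of an edge in `S`. -/
def Step (S : Set E) (p q : V × ℕ+) : Prop :=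
  ∃ e ∈ S, ∃ c : ℕ+, p = sm c (G.x e) ∧ q = sm c (G.x (G.bar e))

/-- Reachability by edges in `S`. -/
def R (S : Set E) : V × ℕ+ → V × ℕ+ → Prop := Relation.ReflTransGen (G.Step S)

/-- Bar-closed edge sets. -/
def BC (S : Set E) : Prop := ∀ e ∈ S, G.bar e ∈ S

/-- `p` is equivalent to a multiple of `q`. -/
def ge (S : Set E) (p q : V × ℕ+) : Prop := ∃ k : ℕ+, G.R S p (sm k q)

/-- All edges but `e` and its reverse. -/
def del (e : E) : Set E := {f | f ≠ e ∧ f ≠ G.bar e}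

variable {G}

theorem R.refl {S : Set E} (p : V × ℕ+) : G.R S p p := Relation.ReflTransGen.refl

theorem R.trans {S : Set E} {p q r : V × ℕ+} (h : G.R S p q) (h' : G.R S q r) : G.R S p r :=
  Relation.ReflTransGen.trans h h'

theorem R.mono {S S' : Set E} (hs : S ⊆ S') {p q : V × ℕ+} (h : G.R S p q) : G.R S' p q :=
  Relation.ReflTransGen.mono (fun _ _ hh => by
    obtain ⟨e, he, c, h1, h2⟩ := hh
    exact ⟨e, hs he, c, h1, h2⟩) _ _ h

theorem R.edge {S : Set E} {e : E} (he : e ∈ S) : G.R S (G.x e) (G.x (G.bar e)) :=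
  Relation.ReflTransGen.single ⟨e, he, 1, (sm_one _).symm, (sm_one _).symm⟩

theorem R.smul {S : Set E} {p q : V × ℕ+} (k : ℕ+) (h : G.R S p q) :
    G.R S (sm k p) (sm k q) := by
  induction h with
  | refl => exact R.refl _
  | tail _ hs ih =>
    obtain ⟨e, he, c, rfl, rfl⟩ := hs
    exact ih.tail ⟨e, he, k * c, sm_sm _ _ _, sm_sm _ _ _⟩

theorem R.symm {S : Set E} (hS : G.BC S) {p q : V × ℕ+} (h : G.R S p q) : G.R S q p := by
  induction h with
  | refl => exact R.refl _
  | tail _ hs ih =>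
    obtain ⟨e, he, c, rfl, rfl⟩ := hs
    exact Relation.ReflTransGen.head ⟨G.bar e, hS e he, c, rfl, by rw [G.bar_bar]⟩ ih

theorem bc_univ : G.BC Set.univ := fun _ _ => trivial

theorem bc_inter {S T : Set E} (h : G.BC S) (h' : G.BC T) : G.BC (S ∩ T) :=
  fun e he => ⟨h e he.1, h' e he.2⟩

theorem bar_inj {e f : E} (h : G.bar e = G.bar f) : e = f := by
  rw [← G.bar_bar e, h, G.bar_bar]

theorem bc_del (e : E) : G.BC (G.del e) := by
  rintro f ⟨h1, h2⟩
  refine ⟨fun h => h2 ?_, fun h => h1 (bar_inj h)⟩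
  rw [← h, G.bar_bar]

theorem del_bar (e : E) : G.del (G.bar e) = G.del e := by
  ext f; simp [del, G.bar_bar, and_comm]

theorem not_del {e f : E} (h : f ∉ G.del e) : f = e ∨ f = G.bar e := by
  by_contra hc; push Not at hc; exact h hc

theorem ge.refl {S : Set E} (p : V × ℕ+) : G.ge S p p := ⟨1, by rw [sm_one]; exact R.refl _⟩

theorem ge.trans {S : Set E} {p q r : V × ℕ+} (h : G.ge S p q) (h' : G.ge S q r) :
    G.ge S p r := by
  obtain ⟨k, hk⟩ := h
  obtain ⟨m, hm⟩ := h'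
  exact ⟨k * m, by rw [← sm_sm]; exact hk.trans (hm.smul k)⟩

theorem ge.mono {S S' : Set E} (hs : S ⊆ S') {p q : V × ℕ+} (h : G.ge S p q) : G.ge S' p q :=
  ⟨h.choose, h.choose_spec.mono hs⟩

theorem R.ge {S : Set E} {p q : V × ℕ+} (h : G.R S p q) : G.ge S p q :=
  ⟨1, by rwa [sm_one]⟩

theorem ge_sm {S : Set E} (k : ℕ+) (p : V × ℕ+) : G.ge S (sm k p) p := ⟨k, R.refl _⟩

theorem ge_vert {S : Set E} (v : V) (a : ℕ+) : G.ge S (v, a) (v, 1) :=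
  ⟨a, by simp only [sm, mul_one]; exact R.refl _⟩

theorem restrict {S : Set E} {c p q : V × ℕ+} (h : G.R S p q) (hc : G.ge Set.univ c p) :
    G.R (S ∩ {e | G.ge Set.univ c (G.x e)}) p q ∧ G.ge Set.univ c q := by
  induction h with
  | refl => exact ⟨R.refl _, hc⟩
  | tail _ hs ih =>
    obtain ⟨e, he, k, rfl, rfl⟩ := hs
    refine ⟨ih.1.tail ⟨e, ⟨he, ih.2.trans (ge_sm k _)⟩, k, rfl, rfl⟩, ih.2.trans ?_⟩
    exact R.ge ((R.edge (Set.mem_univ e)).smul k)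

theorem first_cross {S : Set E} {p q : V × ℕ+} (B : Set E) (h : G.R S p q) :
    G.R (S ∩ Bᶜ) p q ∨ ∃ g ∈ S, g ∈ B ∧ G.ge (S ∩ Bᶜ) p (G.x g) := by
  induction h with
  | refl => exact Or.inl (R.refl _)
  | tail _ hs ih =>
    obtain ⟨e, he, k, rfl, rfl⟩ := hs
    rcases ih with ih | ih
    · by_cases hB : e ∈ B
      · exact Or.inr ⟨e, he, hB, k, ih⟩
      · exact Or.inl (ih.tail ⟨e, ⟨he, hB⟩, k, rfl, rfl⟩)
    · exact Or.inr ih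

/-- first crossing of the single pair `e`. -/
theorem first_cross_one {S : Set E} {p q : V × ℕ+} (e : E) (h : G.R S p q) :
    G.R (S ∩ G.del e) p q ∨ ∃ g, (g = e ∨ g = G.bar e) ∧ G.ge (S ∩ G.del e) p (G.x g) := by
  rcases first_cross (G.del e)ᶜ h with h | ⟨g, _, hg, h⟩
  · left; simpa using h
  · right; exact ⟨g, not_del hg, by simpa using h⟩

variable (G)

/-- Edges strictly below the class of `c`. -/
def D (c : V × ℕ+) : Set E := {e | G.ge Set.univ c (G.x e) ∧ ¬ G.ge Set.univ (G.x e) c}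

/-- Edges in the class of `c`. -/
def EC (c : V × ℕ+) : Set E := {e | G.ge Set.univ c (G.x e) ∧ G.ge Set.univ (G.x e) c}

/-- Vertices in the class of `c`. -/
def VC (c : V × ℕ+) : Set V := {v | G.ge Set.univ c (v, 1) ∧ G.ge Set.univ (v, 1) c}

/-- Abstract strict monotone cycle. -/
def SMC : Prop := ∃ (e : E) (k : ℕ+), k ≠ 1 ∧ G.R (G.del e) (G.x (G.bar e)) (sm k (G.x e))

/-- Class with a self-multiple. -/
def PP (c : V × ℕ+) : Prop := ∃ k : ℕ+, k ≠ 1 ∧ G.R Set.univ c (sm k c)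

variable {G}

theorem R.bar {e : E} : G.R Set.univ (G.x e) (G.x (G.bar e)) := R.edge trivial

theorem R.bar' {e : E} : G.R Set.univ (G.x (G.bar e)) (G.x e) := R.symm bc_univ R.bar

theorem bc_D (c : V × ℕ+) : G.BC (G.D c) := fun _ he =>
  ⟨he.1.trans R.bar.ge, fun h => he.2 (R.bar.ge.trans h)⟩

theorem bc_EC (c : V × ℕ+) : G.BC (G.EC c) := fun _ he =>
  ⟨he.1.trans R.bar.ge, R.bar'.ge.trans he.2⟩

theorem D_del {c : V × ℕ+} {e : E} (he : e ∈ G.EC c) : G.D c ⊆ G.del e := by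
  intro f hf
  refine ⟨?_, ?_⟩
  · rintro rfl; exact hf.2 he.2
  · rintro rfl; exact hf.2 (bc_EC c e he).2

theorem PP.up {p q : V × ℕ+} (h : G.PP p) (hq : G.ge Set.univ q p) : G.PP q := by
  obtain ⟨k, hk, h⟩ := h
  obtain ⟨m, hm⟩ := hq
  refine ⟨k, hk, hm.trans ((h.smul m).trans ?_)⟩
  rw [sm_sm, mul_comm, ← sm_sm]
  exact (R.symm bc_univ hm).smul k

/-- no `D c` edges at a vertex of the class -/
theorem D_free {c p q : V × ℕ+} (hv : G.ge Set.univ (p.1, 1) c) (h : G.R (G.D c) p q) :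
    q = p := by
  induction h with
  | refl => rfl
  | tail _ hs ih =>
    obtain ⟨e, he, k, h1, rfl⟩ := hs
    exfalso
    apply he.2
    have : p.1 = G.o e := by rw [← ih, h1]; rfl
    rw [this] at hv
    exact (ge_vert _ _).trans hv

/-- below the class, reachability is by `D c` edges -/
theorem R_D {c p q : V × ℕ+} (h : G.R Set.univ p q) (h1 : G.ge Set.univ c p)
    (h2 : ¬ G.ge Set.univ p c) : G.R (G.D c) p q := by
  have key : G.R (G.D c) p q ∧ G.R Set.univ p q := by
    induction h with
    | refl => exact ⟨R.refl _, R.refl _⟩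
    | tail _ hs ih =>
      obtain ⟨e, he, k, rfl, rfl⟩ := hs
      refine ⟨ih.1.tail ⟨e, ⟨?_, ?_⟩, k, rfl, rfl⟩, ih.2.tail ⟨e, trivial, k, rfl, rfl⟩⟩
      · exact (h1.trans ih.2.ge).trans (ge_sm k _)
      · intro h; exact h2 (ih.2.ge.trans ((ge_sm k _).trans h))
  exact key.1

end basic
end PG

namespace PG
section walks
variable {V E : Type} (G : PG V E) (c : V × ℕ+) (T : Set E)

/-- Going down from one endpoint to another. -/
def W (a b : E) (k : ℕ+) : Prop := b ∈ G.EC c ∧ b ∈ T ∧ G.R (G.D c) (G.x a) (sm k (G.x b))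

/-- Unscaled walks with `n` crossings. -/
inductive Wk : ℕ → E → E → ℕ+ → Prop
  | base {a b : E} {k : ℕ+} : W G c T a b k → Wk 0 a b k
  | step {n : ℕ} {a b d : E} {k m : ℕ+} :
      W G c T a b k → Wk n (G.bar b) d m → Wk (n + 1) a d (k * m)

/-- Unscaled reachable endpoints. -/
def U (a : E) : Set E := {b | ∃ n k, Wk G c T n a b k}

variable {G c T}

theorem W.trans {a b d : E} {k m : ℕ+} (h : W G c T a b k) (h' : W G c T b d m) :
    W G c T a d (k * m) :=
  ⟨h'.1, h'.2.1, by rw [← sm_sm]; exact h.2.2.trans (h'.2.2.smul k)⟩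

theorem W.refl {a : E} (h : a ∈ G.EC c) (h' : a ∈ T) : W G c T a a 1 :=
  ⟨h, h', by rw [sm_one]; exact R.refl _⟩

theorem Wk.prepend {n : ℕ} {a b d : E} {k m : ℕ+} (h : W G c T a b k) (h' : Wk G c T n b d m) :
    Wk G c T n a d (k * m) := by
  cases h' with
  | base h' => exact .base (h.trans h')
  | step h1 h2 => rw [← mul_assoc]; exact .step (h.trans h1) h2

theorem Wk.mem {n : ℕ} {a b : E} {k : ℕ+} (h : Wk G c T n a b k) : b ∈ G.EC c ∧ b ∈ T := by
  induction h with
  | base h => exact ⟨h.1, h.2.1⟩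
  | step _ _ ih => exact ih

theorem Wk.trans {n n' : ℕ} {a b d : E} {k m : ℕ+} (h : Wk G c T n a b k)
    (h' : Wk G c T n' b d m) : Wk G c T (n + n') a d (k * m) := by
  induction h with
  | base h => rw [zero_add]; exact h'.prepend h
  | @step n a f d' k1 m1 h1 _ ih =>
    have := Wk.step h1 (ih h')
    rw [mul_assoc, show n + 1 + n' = n + n' + 1 by ring]
    exact this

theorem Wk.cross {n n' : ℕ} {a b d : E} {k m : ℕ+} (h : Wk G c T n a b k)
    (h' : Wk G c T n' (G.bar b) d m) : Wk G c T (n + n' + 1) a d (k * m) := by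
  have h1 : Wk G c T (n' + 1) b d m := by
    have := Wk.step (W.refl h.mem.1 h.mem.2) h'
    rwa [one_mul] at this
  exact h.trans h1

theorem U_refl {a : E} (h : a ∈ G.EC c) (h' : a ∈ T) : a ∈ U G c T a :=
  ⟨0, 1, .base (W.refl h h')⟩

theorem U_trans {a b d : E} (h : b ∈ U G c T a) (h' : d ∈ U G c T b) : d ∈ U G c T a := by
  obtain ⟨n, k, h⟩ := h
  obtain ⟨m, j, h'⟩ := h'
  exact ⟨_, _, h.trans h'⟩

theorem U_bar (hT : G.BC T) {a b : E} (h : b ∈ U G c T a) : G.bar b ∈ U G c T a := by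
  obtain ⟨n, k, h⟩ := h
  exact ⟨_, _, h.cross (.base (W.refl (bc_EC c _ h.mem.1) (hT _ h.mem.2)))⟩

/-- Splitting a walk at a crossing of `e`. -/
theorem Wk.split (hDT : G.D c ⊆ T) {n : ℕ} {a d : E} {K : ℕ+} (h : Wk G c T n a d K) {e : E}
    (he : e ∈ G.EC c) :
    G.R (T ∩ G.del e) (G.x a) (sm K (G.x d)) ∨
    ∃ f n1 n2 K1 K2, (f = e ∨ f = G.bar e) ∧ Wk G c T n1 a f K1 ∧ Wk G c T n2 (G.bar f) d K2 ∧
      n1 + n2 + 1 = n ∧ K = K1 * K2 := by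
  have hsub : G.D c ⊆ T ∩ G.del e := fun f hf => ⟨hDT hf, D_del he hf⟩
  induction h with
  | base h => exact Or.inl (h.2.2.mono hsub)
  | @step n a b d k m h1 h2 ih =>
    by_cases hb : b ∈ G.del e
    · rcases ih with ih | ⟨f, n1, n2, K1, K2, hf, w1, w2, hn, hK⟩
      · left
        rw [← sm_sm]
        refine (h1.2.2.mono hsub).trans (R.smul k ?_)
        exact (R.edge (S := T ∩ G.del e) (show b ∈ T ∩ G.del e from ⟨h1.2.1, hb⟩)).trans ih
      · right
        refine ⟨f, n1 + 1, n2, k * K1, K2, hf, .step h1 w1, w2, by omega, ?_⟩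
        rw [hK, mul_assoc]
    · right
      exact ⟨b, 0, n, k, m, not_del hb, .base h1, h2, by omega, rfl⟩

/-- A walk from `e` yields a way down avoiding `e` from one of the two ends. -/
theorem Wk.avoid (hDT : G.D c ⊆ T) {e : E} (he : e ∈ G.EC c) {d : E} :
    ∀ {n : ℕ} {a : E} {K : ℕ+}, (a = e ∨ a = G.bar e) → Wk G c T n a d K →
      ∃ f, (f = e ∨ f = G.bar e) ∧ G.ge (T ∩ G.del e) (G.x f) (G.x d) := by
  intro n
  induction n using Nat.strong_induction_on with
  | _ n ih =>
    intro a K ha h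
    rcases h.split hDT he with h | ⟨f, n1, n2, K1, K2, hf, w1, w2, hn, hK⟩
    · exact ⟨a, ha, K, h⟩
    · refine ih n2 (by omega) ?_ w2
      rcases hf with rfl | rfl
      · exact Or.inr rfl
      · left; exact G.bar_bar _

/-- Shortest strict closed walks give strict monotone cycles. -/
theorem closed_walk (hT : G.BC T) (hDT : G.D c ⊆ T) (U0 : Set E)
    (hU : ∀ a ∈ U0, ∀ b ∈ U G c T a, b ∈ U0)
    (_hE : U0 ⊆ G.EC c ∩ T)
    (hP : ∀ a ∈ U0, ∀ k, G.R (G.D c) (G.x a) (sm k (G.x a)) → k = 1) :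
    ∀ n a K, a ∈ U0 → K ≠ 1 → Wk G c T n a a K → G.SMC := by
  intro n
  induction n using Nat.strong_induction_on with
  | _ n ih =>
    intro a K ha hK h
    cases h with
    | base h => exact absurd (hP a ha _ h.2.2) hK
    | @step n _ b _ k m h1 h2 =>
      have hb0 : b ∈ U0 := hU a ha b ⟨0, _, .base h1⟩
      have hbb : G.bar b ∈ U0 := hU b hb0 _ (U_bar hT (U_refl h1.1 h1.2.1))
      have hw : Wk G c T n (G.bar b) b (m * k) := by
        have := h2.trans (Wk.base h1); simpa using this
      have hmk : m * k ≠ 1 := by rwa [mul_comm]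
      rcases hw.split hDT h1.1 with h | ⟨f, n1, n2, K1, K2, hf, w1, w2, hn, hK'⟩
      · exact ⟨b, _, hmk, h.mono Set.inter_subset_right⟩
      · have hor : K1 ≠ 1 ∨ K2 ≠ 1 := by
          by_contra hc
          push Not at hc
          apply hmk
          rw [hK', hc.1, hc.2, one_mul]
        have hrb := Wk.base (W.refl (bc_EC c _ h1.1) (hT _ h1.2.1))
        rcases hf with rfl | rfl
        · rcases hor with h | h
          · have := w1.cross hrb
            exact ih _ (by omega) _ (K1 * 1) hbb (by simpa) this
          · have := w2.cross hrb
            exact ih _ (by omega) _ (K2 * 1) hbb (by simpa) this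
        · rw [G.bar_bar] at w2
          rcases hor with h | h
          · exact ih _ (by omega) _ K1 hbb h w1
          · exact ih _ (by omega) _ K2 hb0 h w2

/-- The sink lemma. -/
theorem sink (hT : G.BC T) (hDT : G.D c ⊆ T)
    (hgen : ∀ p q, G.R Set.univ p q → G.R T p q) (hPc : G.PP c)
    {a : E} (ha : a ∈ G.EC c) (haT : a ∈ T)
    (hmut : ∀ b ∈ U G c T a, a ∈ U G c T b)
    (hP : ∀ b ∈ U G c T a, ∀ k, G.R (G.D c) (G.x b) (sm k (G.x b)) → k = 1) : G.SMC := by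
  have haU : a ∈ U G c T a := U_refl ha haT
  have hcl := closed_walk (c := c) hT hDT (U G c T a) (fun _ h _ h' => U_trans h h')
    (fun b ⟨n, k, h⟩ => h.mem) hP
  by_cases hst : ∃ f g k, f ∈ U G c T a ∧ W G c T f g k ∧ k ≠ 1
  · obtain ⟨f, g, k, hf, hw, hk⟩ := hst
    have hg : g ∈ U G c T a := U_trans hf ⟨0, k, .base hw⟩
    obtain ⟨n, m, h⟩ := U_trans (hmut g hg) hf
    refine hcl n f (k * m) hf (fun h1 => hk (pmul_eq_one h1).1) (h.prepend hw)
  · push Not at hst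
    exfalso
    obtain ⟨k, hk, hR⟩ := hPc.up ha.2
    have key : ∀ q, G.R T (G.x a) q →
        ∃ f ∈ U G c T a, G.R (G.D c) (G.x f) q := by
      intro q hq
      induction hq with
      | refl => exact ⟨a, haU, R.refl _⟩
      | tail hprev hs ih =>
        obtain ⟨g, hg, j, rfl, rfl⟩ := hs
        obtain ⟨f, hf, hr⟩ := ih
        by_cases hgD : g ∈ G.D c
        · exact ⟨f, hf, hr.tail ⟨g, hgD, j, rfl, rfl⟩⟩
        · have h1 : G.ge Set.univ c (G.x g) :=
            (ha.1.trans (R.mono (Set.subset_univ _) hprev).ge).trans (ge_sm j _)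
          have hgE : g ∈ G.EC c := by
            refine ⟨h1, ?_⟩
            by_contra h2
            exact hgD ⟨h1, h2⟩
          have hw : W G c T f g j := ⟨hgE, hg, hr⟩
          obtain rfl := hst f g j hf hw
          refine ⟨G.bar g, U_bar hT (U_trans hf ⟨0, _, .base hw⟩), ?_⟩
          rw [sm_one]; exact R.refl _
    obtain ⟨f, hf, hr⟩ := key _ (hgen _ _ hR)
    exact hk (hst f a k hf ⟨ha, haT, hr⟩)

/-- Existence of sinks. -/
theorem exists_sink [Finite E] {a : E} (ha : a ∈ G.EC c) (haT : a ∈ T) :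
    ∃ b ∈ U G c T a, ∀ d ∈ U G c T b, b ∈ U G c T d := by
  obtain ⟨b, hb, hmin⟩ := Set.exists_min_image (U G c T a) (fun b => (U G c T b).ncard)
    (Set.toFinite _) ⟨a, U_refl ha haT⟩
  refine ⟨b, hb, fun d hd => ?_⟩
  have hsub : U G c T d ⊆ U G c T b := fun f hf => U_trans hd hf
  have := Set.eq_of_subset_of_ncard_le hsub (hmin d (U_trans hb hd)) (Set.toFinite _)
  rw [this]
  obtain ⟨n, k, h⟩ := hb
  exact U_refl h.mem.1 h.mem.2

/-- First invariant property. -/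
def I1 (G : PG V E) (c : V × ℕ+) : Prop :=
  G.PP c ∧ ∀ p, G.ge Set.univ p c → G.ge Set.univ c p → ∀ k, G.R (G.D c) p (sm k p) → k = 1

theorem I1.smc [Finite E] (h : I1 G c) : G.SMC := by
  obtain ⟨hP, hQ⟩ := h
  have hne : ∃ a, a ∈ G.EC c := by
    by_contra hc
    push Not at hc
    obtain ⟨k, hk, hR⟩ := hP
    apply hk
    refine hQ c (ge.refl _) (ge.refl _) k ((restrict hR (ge.refl c)).1.mono ?_)
    rintro e ⟨_, he⟩
    exact ⟨he, fun h => hc e ⟨he, h⟩⟩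
  obtain ⟨a, ha⟩ := hne
  obtain ⟨b, hb, hmut⟩ := exists_sink (T := Set.univ) ha trivial
  obtain ⟨n, k, hb⟩ := hb
  refine sink (T := Set.univ) bc_univ (Set.subset_univ _) (fun _ _ h => h) hP hb.mem.1 trivial
    hmut ?_
  rintro d ⟨n, k, hd⟩ j hj
  exact hQ _ hd.mem.1.2 hd.mem.1.1 j hj

end walks
end PG

namespace PG
section two
variable {V E : Type}

/-- Second invariant property (without the count). -/
structure I2 (G : PG V E) (c z : V × ℕ+) : Prop where
  pp : G.PP c
  le : G.ge Set.univ c z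
  ge : G.ge Set.univ z c
  nv : ¬ G.ge Set.univ (z.1, 1) c
  least : ∀ p, G.ge Set.univ p c → G.ge Set.univ c p → ¬ G.ge Set.univ (p.1, 1) c →
    G.ge (G.D c) p z

/-- The count. -/
def cnt (G : PG V E) (c : V × ℕ+) : Prop := 2 * (G.VC c).ncard < (G.EC c).ncard

/-- An end near the blob. -/
def Near (G : PG V E) (z : V × ℕ+) (T : Set E) (a : E) : Prop :=
  G.ge (T ∩ G.del a) (G.x a) z ∧ G.ge (T ∩ G.del a) z (G.x a)

/-- The setting of the second case. -/
structure Setting (G : PG V E) (c z : V × ℕ+) (T : Set E) : Prop where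
  i2 : I2 G c z
  no : ¬ G.SMC
  bc : G.BC T
  sub : (G.EC c)ᶜ ⊆ T
  gen : ∀ p q, G.R Set.univ p q → G.R T p q
  N : ∀ a ∈ T, a ∈ G.EC c → G.ge (T ∩ G.del a) (G.x (G.bar a)) z →
    ¬ G.ge (T ∩ G.del a) z (G.x a)

variable {G : PG V E} {c z : V × ℕ+} {T : Set E}

theorem D_sub (h : (G.EC c)ᶜ ⊆ T) : G.D c ⊆ T := fun _ hf => h fun hh => hf.2 hh.2

theorem Setting.DT (h : Setting G c z T) : G.D c ⊆ T := D_sub h.sub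

theorem Setting.Ddel (h : Setting G c z T) {a : E} (ha : a ∈ G.EC c) : G.D c ⊆ T ∩ G.del a :=
  fun _ hf => ⟨h.DT hf, D_del ha hf⟩

theorem Setting.i [Finite E] (h : Setting G c z T) {e : E} (he : e ∈ G.EC c) (heT : e ∈ T) :
    ∃ f, (f = e ∨ f = G.bar e) ∧ G.ge (T ∩ G.del e) (G.x f) z := by
  obtain ⟨b, hb, hmut⟩ := exists_sink he heT
  have hex : ∃ d ∈ U G c T b, ¬ G.ge Set.univ (G.o d, 1) c := by
    by_contra hc
    push Not at hc
    apply h.no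
    have hb' := hb
    obtain ⟨n, k, hb'⟩ := hb'
    refine sink h.bc h.DT h.gen h.i2.pp hb'.mem.1 hb'.mem.2 hmut ?_
    intro d hd k hk
    have := D_free (hc d hd) hk
    exact sm_inj (this.trans (sm_one _).symm)
  obtain ⟨d, hd, hnd⟩ := hex
  obtain ⟨n, k, hw⟩ := U_trans hb hd
  obtain ⟨f, hf, hfd⟩ := Wk.avoid h.DT he (Or.inl rfl) hw
  refine ⟨f, hf, hfd.trans ?_⟩
  exact (h.i2.least _ hw.mem.1.2 hw.mem.1.1 hnd).mono (h.Ddel he)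

theorem Setting.ii (h : Setting G c z T) {e : E} (he : e ∈ G.EC c) :
    ∃ f, (f = e ∨ f = G.bar e) ∧ G.ge (T ∩ G.del e) z (G.x f) := by
  obtain ⟨k, hk⟩ := h.i2.ge.trans he.1
  rcases first_cross_one e (h.gen _ _ hk) with h1 | h1
  · exact ⟨e, Or.inl rfl, k, h1⟩
  · exact h1

theorem Setting.near [Finite E] (h : Setting G c z T) {e : E} (he : e ∈ G.EC c) (heT : e ∈ T) :
    Near G z T e ∨ Near G z T (G.bar e) := by
  obtain ⟨f, hf, h1⟩ := h.i he heT
  obtain ⟨g, hg, h2⟩ := h.ii he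
  rcases hf with rfl | rfl <;> rcases hg with rfl | rfl
  · exact Or.inl ⟨h1, h2⟩
  · exfalso
    refine h.N (G.bar f) (h.bc _ heT) (bc_EC _ _ he) ?_ ?_
    · rw [G.bar_bar, del_bar]; exact h1
    · rw [del_bar]; exact h2
  · exact absurd h2 (h.N _ heT he h1)
  · right; unfold Near; rw [del_bar]; exact ⟨h1, h2⟩

theorem Setting.excl (h : Setting G c z T) {b : E} (he : b ∈ G.EC c) (heT : b ∈ T)
    (hn : Near G z T (G.bar b)) :
    ¬ G.ge (T ∩ G.del b) (G.x b) z ∧ ¬ G.ge (T ∩ G.del b) z (G.x b) := by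
  unfold Near at hn
  rw [del_bar] at hn
  refine ⟨fun h1 => ?_, fun h1 => ?_⟩
  · refine h.N (G.bar b) (h.bc _ heT) (bc_EC _ _ he) ?_ ?_
    · rw [G.bar_bar, del_bar]; exact h1
    · rw [del_bar]; exact hn.2
  · exact h.N b heT he hn.1 h1

theorem Setting.farv (h : Setting G c z T) {b : E} (he : b ∈ G.EC c) (heT : b ∈ T)
    (hn : Near G z T (G.bar b)) : G.ge Set.univ (G.o b, 1) c := by
  by_contra hc
  apply (h.excl he heT hn).1
  exact (h.i2.least _ he.2 he.1 hc).mono (h.Ddel he)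

theorem Setting.inj_aux (h : Setting G c z T) {b b' : E} (he : b ∈ G.EC c) (heT : b ∈ T)
    (hn : Near G z T (G.bar b)) (he' : b' ∈ G.EC c) (heT' : b' ∈ T)
    (hn' : Near G z T (G.bar b')) (ho : G.o b = G.o b') (h1 : b ∈ G.del b') (_h2 : b' ∈ G.del b)
    {g : E} (hg : g ∉ G.del b) (hr : G.ge (T ∩ (G.del b ∩ G.del b')) (G.o b, 1) (G.x g)) :
    False := by
  have s1 : T ∩ (G.del b ∩ G.del b') ⊆ T ∩ G.del b := fun _ h => ⟨h.1, h.2.1⟩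
  have s2 : T ∩ (G.del b ∩ G.del b') ⊆ T ∩ G.del b' := fun _ h => ⟨h.1, h.2.2⟩
  have s1' : T ∩ G.del b ∩ G.del b' ⊆ T ∩ G.del b := fun _ h => h.1
  have s2' : T ∩ G.del b ∩ G.del b' ⊆ T ∩ G.del b' := fun _ h => ⟨h.1.1, h.2⟩
  have hb := h.excl he heT hn
  have hb' := h.excl he' heT' hn'
  have hn0 := hn
  have hn0' := hn'
  unfold Near at hn0 hn0'
  rw [del_bar] at hn0 hn0'
  have v1 : ∀ S, G.ge S (G.x b) (G.o b, 1) := fun S => ge_vert _ _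
  have v2 : ∀ S, G.ge S (G.x b') (G.o b, 1) := fun S => by rw [ho]; exact ge_vert _ _
  rcases not_del hg with rfl | rfl
  · have hedge : G.ge (T ∩ G.del b') (G.x g) (G.x (G.bar g)) :=
      (R.edge (S := T ∩ G.del b') ⟨heT, h1⟩).ge
    obtain ⟨k, hk⟩ := hn0.1
    rcases first_cross_one b' hk with hk | ⟨g', hg', hk⟩
    · exact hb'.1 ((((v2 _).trans (hr.mono s2)).trans hedge).trans ⟨k, hk.mono s2'⟩)
    · rcases hg' with rfl | rfl
      · exact hb.2 (((hn0.2.trans (hk.mono s1')).trans (v2 _)).trans (hr.mono s1))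
      · exact hb'.1 (((((v2 _).trans (hr.mono s2)).trans hedge).trans (hk.mono s2')).trans hn0'.1)
  · exact hb.1 (((v1 _).trans (hr.mono s1)).trans hn0.1)

theorem Setting.inj (h : Setting G c z T) {b b' : E} (he : b ∈ G.EC c) (heT : b ∈ T)
    (hn : Near G z T (G.bar b)) (he' : b' ∈ G.EC c) (heT' : b' ∈ T)
    (hn' : Near G z T (G.bar b')) (ho : G.o b = G.o b') : b = b' := by
  by_contra hbb
  have hb := h.excl he heT hn
  have hne : b' ≠ G.bar b := by
    rintro rfl
    rw [G.bar_bar] at hn'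
    exact hb.1 hn'.1
  have h2 : b' ∈ G.del b := ⟨fun h => hbb h.symm, hne⟩
  have h1 : b ∈ G.del b' := ⟨hbb, fun hh => hne (by rw [hh, G.bar_bar])⟩
  obtain ⟨k, hk⟩ := (h.farv he heT hn).trans h.i2.le
  rcases first_cross (G.del b ∩ G.del b')ᶜ (h.gen _ _ hk) with hk | ⟨g, _, hg, hr⟩
  · rw [compl_compl] at hk
    have hs : T ∩ (G.del b ∩ G.del b') ⊆ T ∩ G.del b := fun _ h => ⟨h.1, h.2.1⟩
    exact hb.1 ((ge_vert _ _).trans ⟨k, hk.mono hs⟩)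
  · rw [compl_compl] at hr
    by_cases hgb : g ∈ G.del b
    · have hgb' : g ∉ G.del b' := fun hh => hg ⟨hgb, hh⟩
      refine h.inj_aux he' heT' hn' he heT hn ho.symm h2 h1 hgb' ?_
      rw [← ho, Set.inter_comm (G.del b')]
      exact hr
    · exact h.inj_aux he heT hn he' heT' hn' ho h1 h2 hgb hr

/-- The points reached in a tree-like fashion. -/
inductive Good (G : PG V E) (c z : V × ℕ+) (T : Set E) : V × ℕ+ → Prop
  | base {q : V × ℕ+} : G.R (G.D c) z q → Good G c z T q
  | cross {a : E} {m : ℕ+} {q : V × ℕ+} : a ∈ T → a ∈ G.EC c → Near G z T a →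
      q = sm m (G.x (G.bar a)) → Good G c z T (sm m (G.x a)) → Good G c z T q

theorem D_vert {p q : V × ℕ+} (h : G.R (G.D c) p q) (hp : ¬ G.ge Set.univ (p.1, 1) c) :
    ¬ G.ge Set.univ (q.1, 1) c := by
  intro hq
  have := D_free hq (R.symm (bc_D c) h)
  rw [this] at hp
  exact hp hq

theorem Setting.good [Finite E] (h : Setting G c z T) {q : V × ℕ+} (hq : G.R T z q) :
    Good G c z T q := by
  induction hq with
  | refl => exact .base (R.refl _)
  | tail hprev hs ih =>
    obtain ⟨g, hg, j, rfl, rfl⟩ := hs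
    have hcg : G.ge Set.univ c (G.x g) :=
      (h.i2.le.trans (R.mono (Set.subset_univ _) hprev).ge).trans (ge_sm _ _)
    by_cases hgD : g ∈ G.D c
    · generalize hqq : sm j (G.x g) = q at ih
      cases ih with
      | base h1 => subst hqq; exact .base (h1.tail ⟨g, hgD, j, rfl, rfl⟩)
      | @cross a m _ haT haE hn hqa _ =>
        exfalso
        apply hgD.2
        have ho : G.o g = G.o (G.bar a) := by
          have := congrArg Prod.fst (hqq.trans hqa); exact this
        have := h.farv (bc_EC _ _ haE) (h.bc _ haT) (by rwa [G.bar_bar])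
        rw [← ho] at this
        exact (ge_vert _ _).trans this
    · have hgE : g ∈ G.EC c := ⟨hcg, by by_contra h2; exact hgD ⟨hcg, h2⟩⟩
      rcases h.near hgE hg with hn | hn
      · exact .cross hg hgE hn rfl ih
      · have hv := h.farv hgE hg hn
        generalize hqq : sm j (G.x g) = q at ih
        cases ih with
        | base h1 =>
          exfalso
          apply D_vert h1 h.i2.nv
          rw [← hqq]; exact hv
        | @cross a m _ haT haE hn' hqa hgood =>
          have ho : G.o g = G.o (G.bar a) := by
            have := congrArg Prod.fst (hqq.trans hqa); exact this
          have hga := h.inj hgE hg hn (bc_EC _ _ haE) (h.bc _ haT) (by rwa [G.bar_bar]) ho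
          subst hga
          have := sm_inj (hqq.trans hqa)
          subst this
          rw [G.bar_bar]; exact hgood

theorem N_aux (hno : ¬ G.SMC) {a : E} (h1 : G.ge (T ∩ G.del a) (G.x (G.bar a)) z)
    (h2 : G.ge (T ∩ G.del a) z (G.x a)) :
    G.R (T ∩ G.del a) (G.x (G.bar a)) z ∧ G.R (T ∩ G.del a) z (G.x a) := by
  obtain ⟨k, hk⟩ := h1
  obtain ⟨m, hm⟩ := h2
  have h3 : k * m = 1 := by
    by_contra hc
    refine hno ⟨a, k * m, hc, ?_⟩
    rw [← sm_sm]
    exact (hk.trans (hm.smul k)).mono Set.inter_subset_right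
  obtain ⟨rfl, rfl⟩ := pmul_eq_one h3
  rw [sm_one] at hk hm
  exact ⟨hk, hm⟩

theorem I2.smc [Finite V] [Finite E] (h : I2 G c z) (hcnt : cnt G c) : G.SMC := by
  by_contra hno
  by_cases hPD : ∃ k : ℕ+, k ≠ 1 ∧ G.R (G.D c) z (sm k z)
  · obtain ⟨k, hk, hkz⟩ := hPD
    have S : Setting G c z Set.univ := by
      refine ⟨h, hno, bc_univ, Set.subset_univ _, fun _ _ h => h, ?_⟩
      intro a _ haE h1 h2
      obtain ⟨r1, r2⟩ := N_aux hno h1 h2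
      refine hno ⟨a, k, hk, ?_⟩
      have hs : G.D c ⊆ Set.univ ∩ G.del a := fun _ hf => ⟨trivial, D_del haE hf⟩
      have r3 := (r1.trans (hkz.mono hs)).trans (r2.smul k)
      exact r3.mono Set.inter_subset_right
    let N : Set E := {b | b ∈ G.EC c ∧ Near G z Set.univ (G.bar b)}
    have h1 : G.EC c ⊆ N ∪ G.bar '' N := by
      intro e he
      rcases S.near he trivial with hn | hn
      · right
        exact ⟨G.bar e, ⟨bc_EC _ _ he, by rwa [G.bar_bar]⟩, G.bar_bar e⟩
      · exact Or.inl ⟨he, hn⟩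
    have h2 : N.ncard ≤ (G.VC c).ncard := by
      refine Set.ncard_le_ncard_of_injOn G.o ?_ ?_ (Set.toFinite _)
      · rintro b ⟨hb, hn⟩
        exact ⟨hb.1.trans (ge_vert _ _), S.farv hb trivial hn⟩
      · rintro b ⟨hb, hn⟩ b' ⟨hb', hn'⟩ ho
        exact S.inj hb trivial hn hb' trivial hn' ho
    have h3 : (G.EC c).ncard ≤ N.ncard + N.ncard := by
      refine (Set.ncard_le_ncard h1 (Set.toFinite _)).trans ((Set.ncard_union_le _ _).trans ?_)
      exact Nat.add_le_add_left (Set.ncard_image_le (Set.toFinite _)) _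
    unfold cnt at hcnt
    omega
  · let P : Set (Set E) := {T | G.BC T ∧ (G.EC c)ᶜ ⊆ T ∧ ∀ p q, G.R Set.univ p q → G.R T p q}
    obtain ⟨T, hTP, hmin⟩ := Set.exists_min_image P (fun T => T.ncard) (Set.toFinite _)
      ⟨Set.univ, bc_univ, Set.subset_univ _, fun _ _ h => h⟩
    obtain ⟨hbc, hsub, hgen⟩ := hTP
    have S : Setting G c z T := by
      refine ⟨h, hno, hbc, hsub, hgen, ?_⟩
      intro a haT haE h1 h2
      obtain ⟨r1, r2⟩ := N_aux hno h1 h2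
      have r3 := r1.trans r2
      have hbc' : G.BC (T ∩ G.del a) := bc_inter hbc (bc_del a)
      have hP' : T ∩ G.del a ∈ P := by
        refine ⟨hbc', fun f hf => ⟨hsub hf, ?_, ?_⟩, fun p q hpq => ?_⟩
        · rintro rfl; exact hf haE
        · rintro rfl; exact hf (bc_EC _ _ haE)
        · replace hpq := hgen _ _ hpq
          induction hpq with
          | refl => exact R.refl _
          | tail _ hs ih =>
            obtain ⟨g, hg, j, rfl, rfl⟩ := hs
            by_cases hga : g ∈ G.del a
            · exact ih.tail ⟨g, ⟨hg, hga⟩, j, rfl, rfl⟩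
            · refine R.trans ih (R.smul j ?_)
              rcases not_del hga with rfl | rfl
              · exact R.symm hbc' r3
              · rw [G.bar_bar]; exact r3
      have hlt : (T ∩ G.del a).ncard < T.ncard := by
        refine Set.ncard_lt_ncard ⟨Set.inter_subset_left, fun hs => ?_⟩ (Set.toFinite _)
        exact (hs haT).2.1 rfl
      exact absurd (hmin _ hP') (not_le.2 hlt)
    obtain ⟨k, hk, hkz⟩ := h.pp.up h.ge
    have hg := S.good (S.gen _ _ hkz)
    generalize hqq : sm k z = q at hg
    cases hg with
    | base h1 => exact hPD ⟨k, hk, by rw [hqq]; exact h1⟩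
    | @cross a m _ haT haE hn hqa _ =>
      apply h.nv
      have ho : z.1 = G.o (G.bar a) := by
        have := congrArg Prod.fst (hqq.trans hqa); exact this
      rw [ho]
      exact S.farv (bc_EC _ _ haE) (S.bc _ haT) (by rwa [G.bar_bar])

end two
end PG

namespace PG
section transfer
variable {V E V' E' : Type}

/-- Equivariant map of points. -/
def mp (φ : V → V') (μ : V → ℕ+) (p : V × ℕ+) : V' × ℕ+ := (φ p.1, μ p.1 * p.2)

theorem mp_sm (φ : V → V') (μ : V → ℕ+) (k : ℕ+) (p : V × ℕ+) :
    mp φ μ (sm k p) = sm k (mp φ μ p) := by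
  simp [mp, sm, mul_left_comm]

theorem sm_vert (p : V × ℕ+) : p = sm p.2 (p.1, 1) := by simp [sm]

/-- Compatibility of a map with edges. -/
def Half (G : PG V E) (G' : PG V' E') (φ : V → V') (μ : V → ℕ+) : Prop :=
  ∀ e, G'.R Set.univ (mp φ μ (G.x e)) (mp φ μ (G.x (G.bar e)))

/-- Equivalence of the induced equivalence relations. -/
structure Eqv (G : PG V E) (G' : PG V' E') (φ : V → V') (μ : V → ℕ+) (ψ : V' → V)
    (ν : V' → ℕ+) : Prop where
  f : Half G G' φ μ
  h : Half G' G ψ ν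
  hf : ∀ v, G.R Set.univ (mp ψ ν (mp φ μ (v, 1))) (v, 1)
  fh : ∀ v, G'.R Set.univ (mp φ μ (mp ψ ν (v, 1))) (v, 1)

variable {G : PG V E} {G' : PG V' E'} {φ : V → V'} {μ : V → ℕ+} {ψ : V' → V} {ν : V' → ℕ+}

theorem Half.R (h : Half G G' φ μ) {p q : V × ℕ+} (hpq : G.R Set.univ p q) :
    G'.R Set.univ (mp φ μ p) (mp φ μ q) := by
  induction hpq with
  | refl => exact R.refl _
  | tail _ hs ih =>
    obtain ⟨e, _, k, rfl, rfl⟩ := hs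
    refine PG.R.trans ih ?_
    rw [mp_sm, mp_sm]
    exact (h e).smul k

theorem Half.ge (h : Half G G' φ μ) {p q : V × ℕ+} (hpq : G.ge Set.univ p q) :
    G'.ge Set.univ (mp φ μ p) (mp φ μ q) := by
  obtain ⟨k, hk⟩ := hpq
  exact ⟨k, by rw [← mp_sm]; exact h.R hk⟩

theorem Eqv.symm (h : Eqv G G' φ μ ψ ν) : Eqv G' G ψ ν φ μ := ⟨h.h, h.f, h.fh, h.hf⟩

theorem Eqv.hf' (h : Eqv G G' φ μ ψ ν) (p : V × ℕ+) :
    G.R Set.univ (mp ψ ν (mp φ μ p)) p := by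
  have := (h.hf p.1).smul p.2
  rwa [← mp_sm, ← mp_sm, ← sm_vert] at this

theorem Eqv.fh' (h : Eqv G G' φ μ ψ ν) (p : V' × ℕ+) :
    G'.R Set.univ (mp φ μ (mp ψ ν p)) p := h.symm.hf' p

/-- Corresponding points. -/
def Cor (G : PG V E) (G' : PG V' E') (φ : V → V') (μ : V → ℕ+) (c : V × ℕ+) (c' : V' × ℕ+) :
    Prop :=
  ∀ p, (G.ge Set.univ p c ↔ G'.ge Set.univ (mp φ μ p) c') ∧
    (G.ge Set.univ c p ↔ G'.ge Set.univ c' (mp φ μ p))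

theorem Eqv.ge_iff (h : Eqv G G' φ μ ψ ν) (p q : V × ℕ+) :
    G.ge Set.univ p q ↔ G'.ge Set.univ (mp φ μ p) (mp φ μ q) := by
  refine ⟨h.f.ge, fun hh => ?_⟩
  have := h.h.ge hh
  exact ((R.symm bc_univ (h.hf' p)).ge.trans this).trans (h.hf' q).ge

theorem Eqv.cor (h : Eqv G G' φ μ ψ ν) (c : V × ℕ+) : Cor G G' φ μ c (mp φ μ c) :=
  fun p => ⟨h.ge_iff p c, h.ge_iff c p⟩

theorem Eqv.cor' (h : Eqv G G' φ μ ψ ν) (c' : V' × ℕ+) : Cor G G' φ μ (mp ψ ν c') c' := by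
  intro p
  have h1 := h.fh' c'
  have h2 := R.symm bc_univ h1
  rw [h.ge_iff, h.ge_iff]
  exact ⟨⟨fun a => a.trans h1.ge, fun a => a.trans h2.ge⟩,
    ⟨fun a => h2.ge.trans a, fun a => h1.ge.trans a⟩⟩

theorem Eqv.corH (h : Eqv G G' φ μ ψ ν) (c : V × ℕ+) (p' : V' × ℕ+) :
    (G.ge Set.univ (mp ψ ν p') c ↔ G'.ge Set.univ p' (mp φ μ c)) ∧
    (G.ge Set.univ c (mp ψ ν p') ↔ G'.ge Set.univ (mp φ μ c) p') := by
  have := h.symm.cor' c p'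
  exact ⟨this.1.symm, this.2.symm⟩

theorem Eqv.FD (h : Eqv G G' φ μ ψ ν) {c p q : V × ℕ+} (hpq : G.R (G.D c) p q) :
    G'.R (G'.D (mp φ μ c)) (mp φ μ p) (mp φ μ q) := by
  induction hpq with
  | refl => exact R.refl _
  | tail _ hs ih =>
    obtain ⟨e, he, k, rfl, rfl⟩ := hs
    refine PG.R.trans ih ?_
    rw [mp_sm, mp_sm]
    refine R.smul k (R_D (h.f e) ((h.ge_iff _ _).1 he.1) ?_)
    intro hh
    exact he.2 ((h.ge_iff _ _).2 hh)

theorem Eqv.HD (h : Eqv G G' φ μ ψ ν) {c : V × ℕ+} {p q : V' × ℕ+}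
    (hpq : G'.R (G'.D (mp φ μ c)) p q) :
    G.R (G.D c) (mp ψ ν p) (mp ψ ν q) := by
  induction hpq with
  | refl => exact R.refl _
  | tail _ hs ih =>
    obtain ⟨e, he, k, rfl, rfl⟩ := hs
    refine PG.R.trans ih ?_
    rw [mp_sm, mp_sm]
    refine R.smul k (R_D (h.h e) ((h.corH c _).2.2 he.1) ?_)
    intro hh
    exact he.2 ((h.corH c _).1.1 hh)

theorem Eqv.pp (h : Eqv G G' φ μ ψ ν) {c : V × ℕ+} (hc : G.PP c) : G'.PP (mp φ μ c) := by
  obtain ⟨k, hk, hR⟩ := hc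
  exact ⟨k, hk, by rw [← mp_sm]; exact h.f.R hR⟩

theorem Eqv.I1 (h : Eqv G G' φ μ ψ ν) {c : V × ℕ+} (hc : I1 G c) : I1 G' (mp φ μ c) := by
  refine ⟨h.pp hc.1, fun p h1 h2 k hk => ?_⟩
  have := h.HD hk
  rw [mp_sm] at this
  exact hc.2 _ ((h.corH c p).1.2 h1) ((h.corH c p).2.2 h2) k this

theorem Eqv.I2 (h : Eqv G G' φ μ ψ ν) {c z : V × ℕ+} (hc : I2 G c z) :
    I2 G' (mp φ μ c) (mp φ μ z) := by
  refine ⟨h.pp hc.pp, h.f.ge hc.le, h.f.ge hc.ge, ?_, ?_⟩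
  · intro hh
    apply hc.nv
    rw [h.ge_iff]
    refine PG.ge.trans ?_ hh
    exact ge_vert _ _
  · intro p h1 h2 h3
    have h4 : ¬ G.ge Set.univ ((mp ψ ν p).1, 1) c := by
      intro hh
      apply h3
      rw [← (h.corH c _).1]
      refine PG.ge.trans ?_ hh
      exact ge_vert _ _
    obtain ⟨m, hm⟩ := hc.least _ ((h.corH c p).1.2 h1) ((h.corH c p).2.2 h2) h4
    have hm' := h.FD hm
    rw [mp_sm] at hm'
    refine ⟨m, R.trans ?_ hm'⟩
    have h5 : G'.R (G'.D (mp φ μ c)) (p.1, 1) (mp φ μ (mp ψ ν (p.1, 1))) := by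
      refine R_D (R.symm bc_univ (h.fh _)) (h2.trans ?_) h3
      exact ge_vert p.1 p.2
    have h6 := h5.smul p.2
    rwa [← mp_sm, ← mp_sm, ← sm_vert] at h6

/-- The invariant. -/
def Inv (G : PG V E) : Prop := (∃ c, PG.I1 G c) ∨ ∃ c z, PG.I2 G c z ∧ cnt G c

theorem Inv.smc [Finite V] [Finite E] (h : Inv G) : G.SMC := by
  rcases h with ⟨c, h⟩ | ⟨c, z, h, h'⟩
  · exact h.smc
  · exact h.smc h'

theorem Eqv.inv (h : Eqv G G' φ μ ψ ν) (hcnt : ∀ c c', Cor G G' φ μ c c' → (cnt G c ↔ cnt G' c')) :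
    Inv G ↔ Inv G' := by
  constructor
  · rintro (⟨c, hc⟩ | ⟨c, z, hc, hn⟩)
    · exact Or.inl ⟨_, h.I1 hc⟩
    · exact Or.inr ⟨_, _, h.I2 hc, (hcnt _ _ (h.cor c)).1 hn⟩
  · rintro (⟨c, hc⟩ | ⟨c, z, hc, hn⟩)
    · exact Or.inl ⟨_, h.symm.I1 hc⟩
    · exact Or.inr ⟨_, _, h.symm.I2 hc, (hcnt _ _ (h.cor' c)).2 hn⟩

/-- Mutual comparability. -/
def eqv (G : PG V E) (p q : V × ℕ+) : Prop := G.ge Set.univ p q ∧ G.ge Set.univ q p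

theorem eqv.EC_iff {c : V × ℕ+} {c' : V' × ℕ+} (hc : Cor G G' φ μ c c') {e : E} {e' : E'}
    (h : eqv G' (G'.x e') (mp φ μ (G.x e))) : e' ∈ G'.EC c' ↔ e ∈ G.EC c := by
  have := hc (G.x e)
  constructor
  · rintro ⟨h1, h2⟩
    exact ⟨this.2.2 (h1.trans h.1), this.1.2 (h.2.trans h2)⟩
  · rintro ⟨h1, h2⟩
    exact ⟨(this.2.1 h1).trans h.2, h.1.trans (this.1.1 h2)⟩

theorem eqv.VC_iff {c : V × ℕ+} {c' : V' × ℕ+} (hc : Cor G G' φ μ c c') {v : V} {v' : V'}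
    (h : eqv G' (v', 1) (mp φ μ (v, 1))) : v' ∈ G'.VC c' ↔ v ∈ G.VC c := by
  have := hc (v, 1)
  constructor
  · rintro ⟨h1, h2⟩
    exact ⟨this.2.2 (h1.trans h.1), this.1.2 (h.2.trans h2)⟩
  · rintro ⟨h1, h2⟩
    exact ⟨(this.2.1 h1).trans h.2, h.1.trans (this.1.1 h2)⟩

theorem Eqv.inv_bij (h : Eqv G G' φ μ ψ ν) (ι : E → E') (κ : V → V')
    (hι : Function.Bijective ι) (hκ : Function.Bijective κ)
    (h1 : ∀ e, eqv G' (G'.x (ι e)) (mp φ μ (G.x e)))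
    (h2 : ∀ v, eqv G' (κ v, 1) (mp φ μ (v, 1))) : Inv G ↔ Inv G' := by
  refine h.inv fun c c' hc => ?_
  have hE : G'.EC c' = ι '' G.EC c := by
    ext e'
    obtain ⟨e, rfl⟩ := hι.2 e'
    rw [hι.1.mem_set_image, (h1 e).EC_iff hc]
  have hV : G'.VC c' = κ '' G.VC c := by
    ext v'
    obtain ⟨v, rfl⟩ := hκ.2 v'
    rw [hκ.1.mem_set_image, (h2 v).VC_iff hc]
  unfold cnt
  rw [hE, hV, Set.ncard_image_of_injective _ hι.1, Set.ncard_image_of_injective _ hκ.1]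

theorem eqv.rfl' {p q : V × ℕ+} (h : p = q) : eqv G p q := by
  subst h; exact ⟨ge.refl _, ge.refl _⟩

theorem eqv.ofR {p q : V × ℕ+} (h : G.R Set.univ p q) : eqv G p q :=
  ⟨h.ge, (R.symm bc_univ h).ge⟩

theorem eqv.trans {p q r : V × ℕ+} (h : eqv G p q) (h' : eqv G q r) : eqv G p r :=
  ⟨h.1.trans h'.1, h'.2.trans h.2⟩

theorem eqv.symm {p q : V × ℕ+} (h : eqv G p q) : eqv G q p := ⟨h.2, h.1⟩

theorem R_of_eq {S : Set E} {p q : V × ℕ+} (h : p = q) : G.R S p q := h ▸ R.refl _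

theorem mp_id (p : V × ℕ+) : mp (id : V → V) (fun _ => 1) p = p := by simp [mp]

/-- Isomorphisms. -/
theorem inv_isom (φ : V → V') (Φ : E → E') (hφ : Function.Bijective φ)
    (hΦ : Function.Bijective Φ) (ho : ∀ x, G'.o (Φ x) = φ (G.o x))
    (hb : ∀ x, G'.bar (Φ x) = Φ (G.bar x)) (hl : ∀ x, G'.L (Φ x) = G.L x) : Inv G ↔ Inv G' := by
  have hx : ∀ e, G'.x (Φ e) = mp φ (fun _ => 1) (G.x e) := by
    intro e; simp [x, mp, ho, hl]
  let ψ := (Equiv.ofBijective φ hφ).symm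
  have h1 : ∀ v, ψ (φ v) = v := fun v => (Equiv.ofBijective φ hφ).symm_apply_apply v
  have h2 : ∀ v, φ (ψ v) = v := fun v => (Equiv.ofBijective φ hφ).apply_symm_apply v
  have hx' : ∀ e, G.x e = mp ψ (fun _ => 1) (G'.x (Φ e)) := by
    intro e; simp [x, mp, ho, hl, h1]
  have H : Eqv G G' φ (fun _ => 1) ψ (fun _ => 1) := by
    refine ⟨fun e => ?_, fun e' => ?_, fun v => ?_, fun v => ?_⟩
    · rw [← hx, ← hx, ← hb]; exact R.bar
    · obtain ⟨e, rfl⟩ := hΦ.2 e'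
      rw [hb, ← hx', ← hx']; exact R.bar
    · apply R_of_eq; simp [mp, h1]
    · apply R_of_eq; simp [mp, h2]
  refine H.inv_bij Φ φ hΦ hφ (fun e => eqv.rfl' (hx e)) (fun v => eqv.rfl' ?_)
  simp [mp]

/-- Slides. -/
theorem inv_slide {G G' : PG V E} {e f : E} {m : ℕ+} (hb : ∀ g, G'.bar g = G.bar g)
    (hfe : f ≠ e) (hfe' : f ≠ G.bar e) (ho : G.o f = G.o e) (hL : G.L e = m * G.L f)
    (hoe : G'.o e = G.o (G.bar f)) (hLe : G'.L e = m * G.L (G.bar f))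
    (hog : ∀ g, g ≠ e → G'.o g = G.o g) (hLg : ∀ g, g ≠ e → G'.L g = G.L g) :
    Inv G ↔ Inv G' := by
  have hx : ∀ g, g ≠ e → G'.x g = G.x g := by
    intro g hg; simp [x, hog g hg, hLg g hg]
  have hfb : G.bar f ≠ e := fun h => hfe' (by rw [← h, G.bar_bar])
  have hxe : G.x e = sm m (G.x f) := by simp [x, sm, ho, hL]
  have hxe' : G'.x e = sm m (G.x (G.bar f)) := by simp [x, sm, hoe, hLe]
  have r1 : G.R Set.univ (G'.x e) (G.x e) := by
    rw [hxe, hxe']; exact R.bar'.smul m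
  have r2 : G'.R Set.univ (G'.x e) (G.x e) := by
    rw [hxe, hxe']
    have := R.bar' (G := G') (e := f)
    rw [hb, hx _ hfb, hx _ hfe] at this
    exact this.smul m
  have s1 : ∀ g, G.R Set.univ (G'.x g) (G.x g) := by
    intro g
    by_cases hg : g = e
    · rw [hg]; exact r1
    · exact R_of_eq (hx g hg)
  have s2 : ∀ g, G'.R Set.univ (G'.x g) (G.x g) := by
    intro g
    by_cases hg : g = e
    · rw [hg]; exact r2
    · exact R_of_eq (hx g hg)
  have H : Eqv G G' id (fun _ => 1) id (fun _ => 1) := by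
    refine ⟨fun g => ?_, fun g => ?_, fun v => ?_, fun v => ?_⟩
    · rw [mp_id, mp_id]
      refine ((R.symm bc_univ (s2 g)).trans R.bar).trans ?_
      rw [hb]; exact s2 _
    · rw [mp_id, mp_id]
      refine ((s1 g).trans R.bar).trans ?_
      rw [hb]; exact R.symm bc_univ (s1 _)
    · rw [mp_id, mp_id]; exact R.refl _
    · rw [mp_id, mp_id]; exact R.refl _
  refine H.inv_bij id id Function.bijective_id Function.bijective_id (fun g => ?_) (fun v => ?_)
  · rw [mp_id]; exact eqv.ofR (s2 g)
  · rw [mp_id]; exact eqv.rfl' rfl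

open Classical in
/-- Induction moves. -/
theorem inv_ind {G G' : PG V E} {e : E} {m m' : ℕ+} (hb : ∀ g, G'.bar g = G.bar g)
    (ho : ∀ g, G'.o g = G.o g) (hloop : G.o (G.bar e) = G.o e) (h1 : G.L e = 1)
    (hk : G.L (G.bar e) = m * m') (h1' : G'.L e = 1) (hk' : G'.L (G.bar e) = m * m')
    (hL : ∀ g, g ≠ e → g ≠ G.bar e → G.o g = G.o e → G'.L g = m * G.L g)
    (hL' : ∀ g, g ≠ e → g ≠ G.bar e → G.o g ≠ G.o e → G'.L g = G.L g) :
    Inv G ↔ Inv G' := by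
  set u := G.o e with hu
  let μ : V → ℕ+ := fun v => if v = u then m else 1
  let ν : V → ℕ+ := fun v => if v = u then m' else 1
  have r1 : ∀ a : ℕ+, G.R Set.univ (u, a) (u, m * m' * a) := by
    intro a
    have := (R.bar (G := G) (e := e)).smul a
    simpa [x, sm, h1, hk, hloop, ← hu, mul_comm, mul_left_comm] using this
  have r2 : ∀ a : ℕ+, G'.R Set.univ (u, a) (u, m * m' * a) := by
    intro a
    have := (R.bar (G := G') (e := e)).smul a
    simpa [x, sm, h1', hk', ho, hb, hloop, ← hu, mul_comm, mul_left_comm] using this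
  have hF : ∀ g, G'.R Set.univ (G'.x g) (mp id μ (G.x g)) ∨ (G.o g = u ∧ (g = e ∨ g = G.bar e)) := by
    intro g
    by_cases hg : g = e ∨ g = G.bar e
    · right
      rcases hg with rfl | rfl
      · exact ⟨rfl, Or.inl rfl⟩
      · exact ⟨hloop, Or.inr rfl⟩
    · push Not at hg
      left
      apply R_of_eq
      by_cases hgu : G.o g = u
      · simp [x, mp, μ, ho, hgu, hL g hg.1 hg.2 hgu]
      · simp [x, mp, μ, ho, hgu, hL' g hg.1 hg.2 hgu]
  have hxe : G.x e = (u, 1) := by simp [x, h1, ← hu]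
  have hxb : G.x (G.bar e) = (u, m * m') := by simp [x, hk, hloop]
  have hxe' : G'.x e = (u, 1) := by simp [x, h1', ho, ← hu]
  have hxb' : G'.x (G.bar e) = (u, m * m') := by simp [x, hk', ho, hloop]
  have hFH : ∀ v, mp id μ (mp id ν (v, 1)) = (v, 1) ∨
      (v = u ∧ mp id μ (mp id ν (v, 1)) = (u, m * m')) := by
    intro v
    by_cases hv : v = u
    · right; exact ⟨hv, by simp [mp, μ, ν, hv]⟩
    · left; simp [mp, μ, ν, hv]
  have hHF : ∀ p, mp id ν (mp id μ p) = mp id μ (mp id ν p) := by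
    intro p; simp only [mp, id]; rw [mul_left_comm]
  have hHF2 : ∀ p, G.R Set.univ (mp id ν (mp id μ p)) p := by
    intro p
    rw [hHF, sm_vert p, mp_sm, mp_sm]
    refine R.smul _ ?_
    rcases hFH p.1 with h | ⟨h, h'⟩
    · exact R_of_eq h
    · rw [h', h]
      have := R.symm bc_univ (r1 1)
      simpa using this
  have hFH2 : ∀ v, G'.R Set.univ (mp id μ (mp id ν (v, 1))) (v, 1) := by
    intro v
    rcases hFH v with h | ⟨h, h'⟩
    · exact R_of_eq h
    · rw [h', h]
      have := R.symm bc_univ (r2 1)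
      simpa using this
  have hfe : G'.R Set.univ (mp id μ (G.x e)) (mp id μ (G.x (G.bar e))) := by
    rw [hxe, hxb]
    simp only [mp, μ, if_true, id]
    have := r2 (m * 1)
    rwa [show m * m' * (m * 1) = m * (m * m') by rw [mul_one, mul_comm]] at this
  have hhe : G.R Set.univ (mp id ν (G'.x e)) (mp id ν (G'.x (G.bar e))) := by
    rw [hxe', hxb']
    simp only [mp, ν, if_true, id]
    have := r1 (m' * 1)
    rwa [show m * m' * (m' * 1) = m' * (m * m') by rw [mul_one, mul_comm]] at this
  have hbar : ∀ g, ¬ (g = e ∨ g = G.bar e) → ¬ (G.bar g = e ∨ G.bar g = G.bar e) := by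
    intro g hg hh
    rcases hh with h | h
    · exact hg (Or.inr (by rw [← h, G.bar_bar]))
    · exact hg (Or.inl (bar_inj h))
  have hFg : ∀ g, ¬ (g = e ∨ g = G.bar e) → G'.R Set.univ (G'.x g) (mp id μ (G.x g)) := by
    intro g hg
    rcases hF g with h | h
    · exact h
    · exact absurd h.2 hg
  have hFeq : ∀ g, ¬ (g = e ∨ g = G.bar e) → G'.x g = mp id μ (G.x g) := by
    intro g hg
    push Not at hg
    by_cases hgu : G.o g = u
    · simp [x, mp, μ, ho, hgu, hL g hg.1 hg.2 hgu]
    · simp [x, mp, μ, ho, hgu, hL' g hg.1 hg.2 hgu]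
  have H : Eqv G G' id μ id ν := by
    refine ⟨fun g => ?_, fun g => ?_, fun v => hHF2 _, hFH2⟩
    · by_cases hg : g = e ∨ g = G.bar e
      · rcases hg with rfl | rfl
        · exact hfe
        · rw [G.bar_bar]; exact R.symm bc_univ hfe
      · refine ((R.symm bc_univ (hFg g hg)).trans R.bar).trans ?_
        rw [hb]
        exact hFg _ (hbar g hg)
    · by_cases hg : g = e ∨ g = G.bar e
      · rcases hg with rfl | rfl
        · rw [hb]; exact hhe
        · rw [hb, G.bar_bar]; exact R.symm bc_univ hhe
      · rw [hb, hFeq g hg, hFeq _ (hbar g hg)]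
        exact ((hHF2 _).trans R.bar).trans (R.symm bc_univ (hHF2 _))
  have hu1 : eqv G' (u, 1) (u, m) := by
    refine ⟨⟨m', ?_⟩, ge_vert _ _⟩
    have := r2 1
    simpa [sm, mul_comm] using this
  have he0 : eqv G' (G'.x e) (mp id μ (G.x e)) := by
    rw [hxe, hxe']; simpa [mp, μ] using hu1
  refine H.inv_bij id id Function.bijective_id Function.bijective_id (fun g => ?_) (fun v => ?_)
  · by_cases hg : g = e ∨ g = G.bar e
    · rcases hg with rfl | rfl
      · exact he0
      · have := ((eqv.ofR (R.bar' (G := G') (e := e))).trans he0).trans (eqv.ofR hfe)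
        rw [hb] at this
        exact this
    · exact eqv.ofR (hFg g hg)
  · by_cases hv : v = u
    · subst hv; simpa [mp, μ] using hu1
    · apply eqv.rfl'; simp [mp, μ, hv]

end transfer
end PG

namespace PG
section amove
variable {V E V' E' : Type} {G : PG V E} {G' : PG V' E'}

open Classical in
/-- A-moves. -/
theorem inv_amove [Finite V] [Finite E] {e d : E} {e' : E'} {φ : V → V'} {Φ : E → E'} {j : ℕ+}
    (hloop : G.o (G.bar e) = G.o e) (h1 : G.L e = 1) (hod : G.o d = G.o e)
    (htd : G.o (G.bar d) ≠ G.o e) (hj : G.L (G.bar e) = G.L d * j)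
    (hun : ∀ g, G.o g = G.o e → g = e ∨ g = G.bar e ∨ g = d)
    (ho' : G'.o e' = φ (G.o (G.bar d))) (ho'' : G'.o (G'.bar e') = φ (G.o (G.bar d)))
    (hL' : G'.L e' = G.L (G.bar d)) (hL'' : G'.L (G'.bar e') = G.L (G.bar d) * G.L (G.bar e))
    (hinj : ∀ w₁ w₂ : V, w₁ ≠ G.o e → w₂ ≠ G.o e → φ w₁ = φ w₂ → w₁ = w₂)
    (hsurj : ∀ v' : V', ∃ w : V, w ≠ G.o e ∧ φ w = v')
    (hΦ : ∀ x : E, x ≠ e → x ≠ G.bar e → x ≠ d → x ≠ G.bar d →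
      Φ x ≠ e' ∧ Φ x ≠ G'.bar e' ∧
      G'.o (Φ x) = φ (G.o x) ∧ G'.bar (Φ x) = Φ (G.bar x) ∧ G'.L (Φ x) = G.L x)
    (hΦi : ∀ x y : E, x ≠ e → x ≠ G.bar e → x ≠ d → x ≠ G.bar d →
      y ≠ e → y ≠ G.bar e → y ≠ d → y ≠ G.bar d → Φ x = Φ y → x = y)
    (hΦs : ∀ y : E', y ≠ e' → y ≠ G'.bar e' →
      ∃ x : E, x ≠ e ∧ x ≠ G.bar e ∧ x ≠ d ∧ x ≠ G.bar d ∧ Φ x = y) : Inv G ↔ Inv G' := by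
  set u := G.o e with hu
  set v := G.o (G.bar d) with hv
  set b := G.L (G.bar d) with hbb
  set l := G.L d with hl
  have hde : d ≠ e := by rintro rfl; exact htd hloop
  have hdb : d ≠ G.bar e := by
    rintro rfl; apply htd; rw [hv, G.bar_bar]
  have hbe : G.bar d ≠ e := fun h => hdb (by rw [← h, G.bar_bar])
  have hbb' : G.bar d ≠ G.bar e := fun h => hde (bar_inj h)
  let φt : V → V' := fun w => if w = u then φ v else φ w
  let μ : V → ℕ+ := fun w => if w = u then b * j else 1
  choose ψ hψ1 hψ2 using hsurj
  have hψφ : ∀ w, w ≠ u → ψ (φ w) = w := fun w hw => hinj _ _ (hψ1 _) hw (hψ2 _)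
  -- points
  have xe : G.x e = (u, 1) := by simp [x, h1, ← hu]
  have xeb : G.x (G.bar e) = (u, l * j) := by simp [x, hj, hloop]
  have xd : G.x d = (u, l) := by simp [x, hod, ← hl]
  have xdb : G.x (G.bar d) = (v, b) := by simp [x, ← hv, ← hbb]
  have xe' : G'.x e' = (φ v, b) := by simp [x, ho', hL']
  have xeb' : G'.x (G'.bar e') = (φ v, b * (l * j)) := by simp [x, ho'', hL'', hj]
  have Fe : mp φt μ (G.x e) = sm j (G'.x e') := by
    rw [xe, xe']; simp [mp, sm, φt, μ, mul_comm]
  have Feb : mp φt μ (G.x (G.bar e)) = sm j (G'.x (G'.bar e')) := by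
    rw [xeb, xeb']; simp [mp, sm, φt, μ, mul_comm, mul_left_comm]
  have Fd : mp φt μ (G.x d) = G'.x (G'.bar e') := by
    rw [xd, xeb']; simp [mp, φt, μ, mul_comm, mul_left_comm, mul_assoc]
  have Fdb : mp φt μ (G.x (G.bar d)) = G'.x e' := by
    rw [xdb, xe']; simp [mp, φt, μ, htd]
  have oth : ∀ g, g ≠ e → g ≠ G.bar e → g ≠ d → G.o g ≠ u := by
    intro g g1 g2 g3 hh
    rcases hun g hh with h | h | h
    exacts [g1 h, g2 h, g3 h]
  have Fg : ∀ g, g ≠ e → g ≠ G.bar e → g ≠ d → g ≠ G.bar d → mp φt μ (G.x g) = G'.x (Φ g) := by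
    intro g g1 g2 g3 g4
    have := oth g g1 g2 g3
    have hh := hΦ g g1 g2 g3 g4
    simp [mp, x, φt, μ, this, hh.2.2.1, hh.2.2.2.2]
  have Hg : ∀ g, g ≠ e → g ≠ G.bar e → g ≠ d → g ≠ G.bar d →
      mp ψ (fun _ => 1) (G'.x (Φ g)) = G.x g := by
    intro g g1 g2 g3 g4
    have := oth g g1 g2 g3
    have hh := hΦ g g1 g2 g3 g4
    simp [mp, x, hh.2.2.1, hh.2.2.2.2, hψφ _ this]
  have obar : ∀ g, g ≠ e → g ≠ G.bar e → g ≠ d → g ≠ G.bar d →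
      G.bar g ≠ e ∧ G.bar g ≠ G.bar e ∧ G.bar g ≠ d ∧ G.bar g ≠ G.bar d := by
    intro g g1 g2 g3 g4
    refine ⟨fun h => g2 ?_, fun h => g1 (bar_inj h), fun h => g4 ?_, fun h => g3 (bar_inj h)⟩
    · rw [← h, G.bar_bar]
    · rw [← h, G.bar_bar]
  have He : mp ψ (fun _ => 1) (G'.x e') = G.x (G.bar d) := by
    rw [xe', xdb]; simp [mp, hψφ v htd]
  have Heb : mp ψ (fun _ => 1) (G'.x (G'.bar e')) = sm (l * j) (G.x (G.bar d)) := by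
    rw [xeb', xdb]; simp [mp, sm, hψφ v htd, mul_comm]
  have rd : G.R Set.univ (u, 1) (u, l * j) := by rw [← xe, ← xeb]; exact R.bar
  have rd2 : G.R Set.univ (G.x d) (sm (l * j) (G.x d)) := by
    rw [xd]
    have := rd.smul l
    simpa [sm, mul_comm, mul_left_comm] using this
  have rd3 : G.R Set.univ (G.x (G.bar d)) (sm (l * j) (G.x (G.bar d))) :=
    (R.bar'.trans rd2).trans (R.bar.smul _)
  have hfe : G'.R Set.univ (mp φt μ (G.x e)) (mp φt μ (G.x (G.bar e))) := by
    rw [Fe, Feb]; exact R.bar.smul j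
  have hfd : G'.R Set.univ (mp φt μ (G.x d)) (mp φt μ (G.x (G.bar d))) := by
    rw [Fd, Fdb]; exact R.bar'
  have hhe : G.R Set.univ (mp ψ (fun _ => 1) (G'.x e'))
      (mp ψ (fun _ => 1) (G'.x (G'.bar e'))) := by
    rw [He, Heb]; exact rd3
  have H : Eqv G G' φt μ ψ (fun _ => 1) := by
    refine ⟨fun g => ?_, fun y => ?_, fun w => ?_, fun v' => ?_⟩
    · by_cases g1 : g = e
      · rw [g1]; exact hfe
      by_cases g2 : g = G.bar e
      · rw [g2, G.bar_bar]; exact R.symm bc_univ hfe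
      by_cases g3 : g = d
      · rw [g3]; exact hfd
      by_cases g4 : g = G.bar d
      · rw [g4, G.bar_bar]; exact R.symm bc_univ hfd
      obtain ⟨k1, k2, k3, k4⟩ := obar g g1 g2 g3 g4
      rw [Fg g g1 g2 g3 g4, Fg _ k1 k2 k3 k4, ← (hΦ g g1 g2 g3 g4).2.2.2.1]
      exact R.bar
    · by_cases y1 : y = e'
      · rw [y1]; exact hhe
      by_cases y2 : y = G'.bar e'
      · rw [y2, G'.bar_bar]; exact R.symm bc_univ hhe
      obtain ⟨g, g1, g2, g3, g4, rfl⟩ := hΦs y y1 y2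
      obtain ⟨k1, k2, k3, k4⟩ := obar g g1 g2 g3 g4
      rw [(hΦ g g1 g2 g3 g4).2.2.2.1, Hg g g1 g2 g3 g4, Hg _ k1 k2 k3 k4]
      exact R.bar
    · by_cases hw : w = u
      · have h2 : mp ψ (fun _ => 1) (mp φt μ (w, 1)) = sm j (G.x (G.bar d)) := by
          rw [xdb]; simp [mp, sm, φt, μ, hw, hψφ v htd, mul_comm]
        have h3 : sm j (G.x d) = (u, l * j) := by rw [xd]; simp [sm, mul_comm]
        rw [h2, hw]
        refine (R.bar'.smul j).trans ?_
        rw [h3]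
        exact R.symm bc_univ rd
      · apply R_of_eq
        simp [mp, φt, μ, hw, hψφ w hw]
    · apply R_of_eq
      simp [mp, φt, μ, hψ1, hψ2]
  -- counting
  let θ : E → E' := fun g => if g = e then e' else if g = G.bar e then G'.bar e' else Φ g
  have hebe : G.bar e ≠ e := G.bar_ne e
  have θe : θ e = e' := by simp [θ]
  have θeb : θ (G.bar e) = G'.bar e' := by simp [θ, hebe]
  have θg : ∀ g, g ≠ e → g ≠ G.bar e → θ g = Φ g := by
    intro g g1 g2; simp [θ, g1, g2]
  have qe : eqv G' (G'.x e') (mp φt μ (G.x e)) := by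
    rw [Fe]
    refine ⟨⟨l, ?_⟩, ge_sm _ _⟩
    have h2 : sm l (sm j (G'.x e')) = G'.x (G'.bar e') := by
      rw [xe', xeb']; simp [sm, mul_comm, mul_left_comm, mul_assoc]
    rw [h2]; exact R.bar
  have qg : ∀ g, g ≠ d → g ≠ G.bar d → eqv G' (G'.x (θ g)) (mp φt μ (G.x g)) := by
    intro g g3 g4
    by_cases g1 : g = e
    · rw [g1, θe]; exact qe
    by_cases g2 : g = G.bar e
    · rw [g2, θeb]
      exact ((eqv.ofR R.bar').trans qe).trans (eqv.ofR hfe)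
    · rw [θg g g1 g2, Fg g g1 g2 g3 g4]; exact eqv.rfl' rfl
  refine H.inv fun c c' hc => ?_
  have hE : G'.EC c' = θ '' (G.EC c \ {d, G.bar d}) := by
    ext y
    constructor
    · intro hy
      have : ∃ g, g ≠ d ∧ g ≠ G.bar d ∧ θ g = y := by
        by_cases y1 : y = e'
        · exact ⟨e, hde.symm, hbe.symm, by rw [θe, y1]⟩
        by_cases y2 : y = G'.bar e'
        · exact ⟨G.bar e, hdb.symm, hbb'.symm, by rw [θeb, y2]⟩
        obtain ⟨g, g1, g2, g3, g4, rfl⟩ := hΦs y y1 y2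
        exact ⟨g, g3, g4, θg g g1 g2⟩
      obtain ⟨g, g3, g4, rfl⟩ := this
      exact ⟨g, ⟨((qg g g3 g4).EC_iff hc).1 hy, by simp [g3, g4]⟩, rfl⟩
    · rintro ⟨g, ⟨hg, hg2⟩, rfl⟩
      simp only [Set.mem_insert_iff, Set.mem_singleton_iff, not_or] at hg2
      exact ((qg g hg2.1 hg2.2).EC_iff hc).2 hg
  have hθi : Set.InjOn θ (G.EC c \ {d, G.bar d}) := by
    rintro g ⟨_, hg⟩ g' ⟨_, hg'⟩ heq
    simp only [Set.mem_insert_iff, Set.mem_singleton_iff, not_or] at hg hg'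
    have hbarne := G'.bar_ne e'
    by_cases g1 : g = e
    · by_cases k1 : g' = e
      · rw [g1, k1]
      by_cases k2 : g' = G.bar e
      · rw [g1, k2, θe, θeb] at heq; exact absurd heq.symm hbarne
      · rw [g1, θe, θg _ k1 k2] at heq
        exact absurd heq.symm (hΦ g' k1 k2 hg'.1 hg'.2).1
    by_cases g2 : g = G.bar e
    · by_cases k1 : g' = e
      · rw [g2, k1, θe, θeb] at heq; exact absurd heq hbarne
      by_cases k2 : g' = G.bar e
      · rw [g2, k2]
      · rw [g2, θeb, θg _ k1 k2] at heq
        exact absurd heq.symm (hΦ g' k1 k2 hg'.1 hg'.2).2.1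
    rw [θg _ g1 g2] at heq
    by_cases k1 : g' = e
    · rw [k1, θe] at heq
      exact absurd heq (hΦ g g1 g2 hg.1 hg.2).1
    by_cases k2 : g' = G.bar e
    · rw [k2, θeb] at heq
      exact absurd heq (hΦ g g1 g2 hg.1 hg.2).2.1
    rw [θg _ k1 k2] at heq
    exact hΦi g g' g1 g2 hg.1 hg.2 k1 k2 hg'.1 hg'.2 heq
  have hV : G'.VC c' = φ '' (G.VC c \ {u}) := by
    ext v'
    have hq : ∀ w, w ≠ u → eqv G' (φ w, 1) (mp φt μ (w, 1)) := by
      intro w hw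
      apply eqv.rfl'; simp [mp, φt, μ, hw]
    constructor
    · intro hv'
      refine ⟨ψ v', ⟨?_, by simpa using hψ1 v'⟩, hψ2 v'⟩
      refine ((hq _ (hψ1 v')).VC_iff hc).1 ?_
      rwa [hψ2]
    · rintro ⟨w, ⟨hw, hw2⟩, rfl⟩
      exact ((hq w (by simpa using hw2)).VC_iff hc).2 hw
  have hφi : Set.InjOn φ (G.VC c \ {u}) := by
    rintro w ⟨_, hw⟩ w' ⟨_, hw'⟩ heq
    exact hinj w w' (by simpa using hw) (by simpa using hw') heq
  have hdu : eqv G (u, 1) (G.x d) := by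
    refine ⟨⟨j, ?_⟩, ?_⟩
    · have : sm j (G.x d) = (u, l * j) := by rw [xd]; simp [sm, mul_comm]
      rw [this]; exact rd
    · rw [xd]; exact ge_vert _ _
  have hdm : u ∈ G.VC c ↔ d ∈ G.EC c :=
    ⟨fun h => ⟨h.1.trans hdu.1, hdu.2.trans h.2⟩, fun h => ⟨h.1.trans hdu.2, hdu.1.trans h.2⟩⟩
  unfold cnt
  rw [hE, hV, hθi.ncard_image, hφi.ncard_image]
  by_cases hm : u ∈ G.VC c
  · have hd := hdm.1 hm
    have hdb' := bc_EC c d hd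
    have hs : ({d, G.bar d} : Set E) ⊆ G.EC c := by
      rintro g (rfl | rfl)
      exacts [hd, hdb']
    have e1 := Set.ncard_sdiff_add_ncard_of_subset hs (Set.toFinite _)
    have e2 := Set.ncard_sdiff_singleton_add_one hm (Set.toFinite _)
    rw [Set.ncard_pair (G.bar_ne d).symm] at e1
    omega
  · have hd : d ∉ G.EC c := fun h => hm (hdm.2 h)
    have hd2 : G.bar d ∉ G.EC c := fun h => hd (by have := bc_EC c _ h; rwa [G.bar_bar] at this)
    rw [Set.sdiff_singleton_eq_self hm]
    have : G.EC c \ {d, G.bar d} = G.EC c := by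
      ext g
      constructor
      · exact fun h => h.1
      · intro h
        refine ⟨h, ?_⟩
        rintro (rfl | rfl)
        exacts [hd h, hd2 h]
    rw [this]

end amove
end PG

namespace LGraph
section conv
variable {V E : Type}

/-- The associated graph with positive labels. -/
def toPG (G : LGraph V E) : PG V E where
  o := G.o
  bar := G.bar
  bar_bar := G.bar_bar
  bar_ne := G.bar_ne
  L := fun e => (G.lab e).natAbs.toPNat'

/-- Labels are nonzero. -/
def NZ (G : LGraph V E) : Prop := ∀ e, G.lab e ≠ 0

theorem L_coe {G : LGraph V E} (h : G.NZ) (e : E) : ((G.toPG.L e : ℕ+) : ℕ) = (G.lab e).natAbs := by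
  have : 0 < (G.lab e).natAbs := Int.natAbs_pos.2 (h e)
  simp [toPG, Nat.toPNat'_coe, this]

theorem q_cons (G : LGraph V E) (e : E) (l : List E) : G.q (e :: l) = G.qe e * G.q l := by
  simp [q]

theorem q_snoc (G : LGraph V E) (e : E) (l : List E) : G.q (l ++ [e]) = G.q l * G.qe e := by
  simp [q]

theorem path_of_R {G : LGraph V E} (h : G.NZ) {S : Set E} {p r : V × ℕ+} (hR : G.toPG.R S p r) :
    ∃ l : List E, (∀ a ∈ l, a ∈ S) ∧ G.IsEdgePath l ∧ (∀ a ∈ l.head?, G.o a = p.1) ∧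
      (l = [] → p = r) ∧
      (∀ e0, G.t e0 = p.1 → G.t (l.getLastD e0) = r.1) ∧
      ∀ z : ℤ, z.natAbs = p.2 → (∃ w : ℤ, w.natAbs = r.2 ∧ (z : ℚ) * G.q l = w) ∧
        ∀ i : Fin l.length, ∃ k : ℤ,
          (z : ℚ) * G.q (l.take i.1) = (k : ℚ) * (G.lab (l.get i) : ℚ) := by
  induction hR using Relation.ReflTransGen.head_induction_on with
  | refl =>
    refine ⟨[], by simp, List.isChain_nil, by simp, fun _ => rfl, by simp, fun z hz => ⟨⟨z, hz, by simp [q]⟩, ?_⟩⟩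
    intro i; exact i.elim0
  | head hs _ ih =>
    obtain ⟨e, he, c, rfl, rfl⟩ := hs
    obtain ⟨l, h1, h2, h3, _, h4, h5⟩ := ih
    refine ⟨e :: l, ?_, ?_, ?_, by simp, ?_, ?_⟩
    · intro a ha
      rcases List.mem_cons.1 ha with rfl | ha
      exacts [he, h1 a ha]
    · exact List.isChain_cons.2 ⟨fun y hy => (h3 y hy).symm, h2⟩
    · intro a ha
      simp only [List.head?_cons, Option.mem_def, Option.some.injEq] at ha
      subst ha; rfl
    · intro e0 _
      rw [List.getLastD_cons]
      exact h4 e rfl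
    · intro z hz
      have hz' : z.natAbs = c * (G.lab e).natAbs := by
        rw [hz, ← L_coe h]; rfl
      have hd : G.lab e ∣ z := by
        rw [← Int.natAbs_dvd_natAbs, hz']; exact Dvd.intro_left _ rfl
      obtain ⟨s, hs⟩ := hd
      have hsc : s.natAbs = c := by
        rw [hs, Int.natAbs_mul, mul_comm] at hz'
        exact Nat.eq_of_mul_eq_mul_right (Int.natAbs_pos.2 (h e)) hz'
      have hle : (G.lab e : ℚ) ≠ 0 := by exact_mod_cast h e
      have hq : ∀ l', (z : ℚ) * G.q (e :: l') = ((s * G.lab (G.bar e) : ℤ) : ℚ) * G.q l' := by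
        intro l'
        rw [q_cons, hs, qe]; push_cast; field_simp
      have h6 := h5 (s * G.lab (G.bar e)) (by
        rw [Int.natAbs_mul, hsc, ← L_coe h]; rfl)
      refine ⟨?_, ?_⟩
      · obtain ⟨w, hw1, hw2⟩ := h6.1
        exact ⟨w, hw1, by rw [hq]; exact hw2⟩
      · intro i
        refine Fin.cases ?_ (fun i => ?_) i
        · refine ⟨s, ?_⟩
          rw [hs]; simp [q]; ring
        · obtain ⟨k, hk⟩ := h6.2 i
          refine ⟨k, ?_⟩
          simp only [Fin.val_succ, List.take_succ_cons, List.get_cons_succ]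
          rw [hq]; exact hk

theorem quot_int {w y : ℤ} (hy : y ≠ 0) {k : ℕ} (hk : k ≠ 1) (h : w.natAbs = k * y.natAbs) :
    (∃ j : ℤ, (w : ℚ) / y = j) ∧ (w : ℚ) / y ≠ 1 := by
  have hd : y ∣ w := by
    rw [← Int.natAbs_dvd_natAbs, h]; exact Dvd.intro_left _ rfl
  obtain ⟨j, rfl⟩ := hd
  have hy' : (y : ℚ) ≠ 0 := by exact_mod_cast hy
  have e1 : ((y * j : ℤ) : ℚ) / y = j := by push_cast; field_simp
  refine ⟨⟨j, e1⟩, ?_⟩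
  rw [e1]
  intro hj
  have hj : j = 1 := by exact_mod_cast hj
  subst hj
  apply hk
  rw [mul_one] at h
  have : 0 < y.natAbs := Int.natAbs_pos.2 hy
  nlinarith

theorem smc_of_R {G : LGraph V E} (h : G.NZ) {e : E} {k : ℕ+} (hk : k ≠ 1)
    (hR : G.toPG.R (G.toPG.del e) (G.toPG.x (G.bar e)) (PG.sm k (G.toPG.x e))) :
    ∃ l, G.IsStrictMonotoneCycle l e := by
  obtain ⟨l, h1, h2, h3, _, h4, h5⟩ := path_of_R h hR
  obtain ⟨⟨w, hw, hwq⟩, h6⟩ := h5 (G.lab (G.bar e)) (by rw [← L_coe h]; rfl)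
  have hle : (G.lab e : ℚ) ≠ 0 := by exact_mod_cast h e
  have hq : G.q (l ++ [e]) = (w : ℚ) / G.lab e := by
    rw [q_snoc, ← hwq, qe]; ring
  have hkn : (k : ℕ) ≠ 1 := fun hh => hk (PNat.coe_inj.1 hh)
  have hw' : w.natAbs = k * (G.lab e).natAbs := by rw [hw, ← L_coe h]; rfl
  obtain ⟨hj, hne⟩ := quot_int (h e) hkn hw'
  refine ⟨l, ⟨⟨h2, ?_, h3, h6⟩, h4 e rfl, ?_⟩, ?_⟩
  · intro a ha
    rw [G.bar_bar]
    exact ⟨(h1 a ha).2, (h1 a ha).1⟩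
  · rw [hq]; exact hj
  · rw [hq]; exact hne

theorem int_of_R {G : LGraph V E} (h : G.NZ) {e : E} {k : ℕ+} (hk : k ≠ 1)
    (hR : G.toPG.R (G.toPG.del e) (G.toPG.x e) (PG.sm k (G.toPG.x e))) :
    ∃ l, G.IsStrictIntegerCycle e l := by
  obtain ⟨l, h1, h2, h3, h0, h4, h5⟩ := path_of_R h hR
  obtain ⟨⟨w, hw, hwq⟩, h6⟩ := h5 (G.lab e) (by rw [← L_coe h]; rfl)
  have hle : (G.lab e : ℚ) ≠ 0 := by exact_mod_cast h e
  have hq : G.q l = (w : ℚ) / G.lab e := by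
    rw [← hwq]; field_simp
  have hkn : (k : ℕ) ≠ 1 := fun hh => hk (PNat.coe_inj.1 hh)
  have hw' : w.natAbs = k * (G.lab e).natAbs := by rw [hw, ← L_coe h]; rfl
  obtain ⟨hj, hne⟩ := quot_int (h e) hkn hw'
  have hl : l ≠ [] := by
    intro hl
    have := h0 hl
    exact hk (PG.sm_inj (this.symm.trans (PG.sm_one _).symm))
  refine ⟨l, ⟨h2, h1, h3, h6⟩, hl, ?_, ?_, ?_⟩
  · obtain ⟨a, l', rfl⟩ := List.exists_cons_of_ne_nil hl
    have h7 := h4 (G.bar e) (by simp [t, G.bar_bar]; rfl)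
    have h8 := h3 a (by simp)
    rw [List.getLastD_cons] at h7 ⊢
    rw [h7, List.headD_cons, h8]; rfl
  · rw [hq]; exact hj
  · rw [hq]; exact hne

theorem R_of_path {G : LGraph V E} (hp : G.Positive) {S : Set E} :
    ∀ (l : List E) (v : V) (z : ℕ+) (e0 : E), (∀ a ∈ l, a ∈ S) → G.IsEdgePath l →
      (∀ a ∈ l.head?, G.o a = v) → G.t e0 = v →
      (∀ i : Fin l.length, ∃ k : ℤ,
          ((z : ℕ) : ℚ) * G.q (l.take i.1) = (k : ℚ) * (G.lab (l.get i) : ℚ)) →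
      ∃ w : ℕ+, ((z : ℕ) : ℚ) * G.q l = ((w : ℕ) : ℚ) ∧
        G.toPG.R S (v, z) (G.t (l.getLastD e0), w) := by
  have hnz : G.NZ := fun e => (hp e).ne'
  have hL : ∀ e, (((G.toPG.L e : ℕ+) : ℕ) : ℤ) = G.lab e := by
    intro e; rw [L_coe hnz]; exact Int.natAbs_of_nonneg (hp e).le
  have hLq : ∀ e, (((G.toPG.L e : ℕ+) : ℕ) : ℚ) = G.lab e := by
    intro e; exact_mod_cast congrArg (Int.cast : ℤ → ℚ) (hL e)
  intro l
  induction l with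
  | nil =>
    intro v z e0 _ _ _ h _
    refine ⟨z, by simp [q], ?_⟩
    simp only [List.getLastD_nil, h]
    exact PG.R.refl _
  | cons a l ih =>
    intro v z e0 h1 h2 h3 h4 h5
    obtain ⟨k, hk⟩ := h5 ⟨0, by simp⟩
    simp only [List.take_zero, List.get_cons_zero, q, List.map_nil, List.prod_nil, mul_one,
      List.get_eq_getElem, List.getElem_cons_zero] at hk
    have hk1 : ((z : ℕ) : ℤ) = k * G.lab a := by exact_mod_cast hk
    have hkp : 0 < k := by
      have hz : (0 : ℤ) < (z : ℕ) := by exact_mod_cast z.pos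
      rw [hk1] at hz
      exact pos_of_mul_pos_left hz (hp a).le
    obtain ⟨m, rfl⟩ : ∃ m : ℕ+, k = ((m : ℕ) : ℤ) :=
      ⟨⟨k.toNat, by omega⟩, by simp; omega⟩
    have hzm : z = m * G.toPG.L a := by
      apply PNat.coe_inj.1
      have : ((z : ℕ) : ℤ) = ((m * G.toPG.L a : ℕ+) : ℕ) := by
        rw [hk1]; push_cast; rw [hL]
      exact_mod_cast this
    have hoa : G.o a = v := h3 a (by simp)
    have hla : (G.lab a : ℚ) ≠ 0 := by exact_mod_cast hnz a
    have hq : ∀ l', ((z : ℕ) : ℚ) * G.q (a :: l') =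
        (((m * G.toPG.L (G.bar a) : ℕ+) : ℕ) : ℚ) * G.q l' := by
      intro l'
      rw [q_cons, hk, qe]; push_cast; rw [hLq]; field_simp
    replace h2 := List.isChain_cons.1 h2
    obtain ⟨w, hw, hR⟩ := ih (G.t a) (m * G.toPG.L (G.bar a)) a
      (fun b hb => h1 b (List.mem_cons_of_mem _ hb)) h2.2 (fun b hb => (h2.1 b hb).symm) rfl
      (by
        intro i
        obtain ⟨k', hk'⟩ := h5 i.succ
        refine ⟨k', ?_⟩
        simp only [Fin.val_succ, List.take_succ_cons, List.get_cons_succ] at hk'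
        rw [hq] at hk'; exact hk')
    refine ⟨w, by rw [hq]; exact hw, ?_⟩
    rw [List.getLastD_cons]
    refine Relation.ReflTransGen.head ⟨a, h1 a (by simp), m, ?_, ?_⟩ hR
    · rw [hzm, ← hoa]; rfl
    · rfl

theorem R_of_smc {G : LGraph V E} (hp : G.Positive) {e : E} {l : List E}
    (h : G.IsStrictMonotoneCycle l e) :
    ∃ k : ℕ+, k ≠ 1 ∧
      G.toPG.R (G.toPG.del e) (G.toPG.x (G.bar e)) (PG.sm k (G.toPG.x e)) := by
  have hnz : G.NZ := fun e => (hp e).ne'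
  have hL : ∀ e, (((G.toPG.L e : ℕ+) : ℕ) : ℤ) = G.lab e := by
    intro e; rw [L_coe hnz]; exact Int.natAbs_of_nonneg (hp e).le
  have hLq : ∀ e, (((G.toPG.L e : ℕ+) : ℕ) : ℚ) = G.lab e := by
    intro e; exact_mod_cast congrArg (Int.cast : ℤ → ℚ) (hL e)
  obtain ⟨⟨⟨h1, h2, h3, h4⟩, h5, k, hk⟩, h6⟩ := h
  obtain ⟨w, hw, hR⟩ := R_of_path hp (S := G.toPG.del e) l (G.o (G.bar e)) (G.toPG.L (G.bar e)) e
    (fun a ha => ⟨by have := (h2 a ha).2; rwa [G.bar_bar] at this, (h2 a ha).1⟩) h1 h3 rfl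
    (by rw [hLq]; exact h4)
  have hle : (G.lab e : ℚ) ≠ 0 := by exact_mod_cast hnz e
  rw [hk] at h6
  rw [q_snoc, qe] at hk
  have hwk : ((w : ℕ) : ℚ) = k * G.lab e := by
    rw [← hw, ← hk, hLq]; field_simp
  have hwk' : ((w : ℕ) : ℤ) = k * G.lab e := by exact_mod_cast hwk
  have hkp : 0 < k := by
    have hz : (0 : ℤ) < (w : ℕ) := by exact_mod_cast w.pos
    rw [hwk'] at hz
    exact pos_of_mul_pos_left hz (hp e).le
  obtain ⟨m, rfl⟩ : ∃ m : ℕ+, k = ((m : ℕ) : ℤ) :=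
    ⟨⟨k.toNat, by omega⟩, by simp; omega⟩
  refine ⟨m, ?_, ?_⟩
  · rintro rfl; simp at h6
  · have hwm : w = m * G.toPG.L e := by
      apply PNat.coe_inj.1
      have : ((w : ℕ) : ℤ) = ((m * G.toPG.L e : ℕ+) : ℕ) := by
        rw [hwk']; push_cast; rw [hL]
      exact_mod_cast this
    rw [h5, hwm] at hR
    exact hR

end conv
end LGraph

namespace LGraph
section moves
variable {V E V' E' : Type}

/-- The state carried along moves. -/
structure St (G : LGraph V E) : Prop where
  fv : Finite V
  fe : Finite E
  nz : G.NZ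
  inv : G.toPG.Inv

theorem L_congr {G : LGraph V E} {G' : LGraph V' E'} {e : E} {e' : E'} (h : G.lab e = G'.lab e') :
    G.toPG.L e = G'.toPG.L e' := by simp [toPG, h]

theorem toP_mul {a b : ℕ} (ha : a ≠ 0) (hb : b ≠ 0) : (a * b).toPNat' = a.toPNat' * b.toPNat' := by
  apply PNat.coe_inj.1
  have h1 : 0 < a := Nat.pos_of_ne_zero ha
  have h2 : 0 < b := Nat.pos_of_ne_zero hb
  simp [Nat.toPNat'_coe, h1, h2]

theorem toP_imul {a b : ℤ} (ha : a ≠ 0) (hb : b ≠ 0) :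
    (a * b).natAbs.toPNat' = a.natAbs.toPNat' * b.natAbs.toPNat' := by
  rw [Int.natAbs_mul, toP_mul (Int.natAbs_ne_zero.2 ha) (Int.natAbs_ne_zero.2 hb)]

theorem St.isom {G : LGraph V E} {G' : LGraph V' E'} (h : G.Isom G') : St G ↔ St G' := by
  obtain ⟨φ, Φ, hφ, hΦ, ho, hb, hl⟩ := h
  have hinv : G.toPG.Inv ↔ G'.toPG.Inv :=
    PG.inv_isom φ Φ hφ hΦ ho hb (fun x => (L_congr (hl x)))
  constructor
  · rintro ⟨_, _, h3, h4⟩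
    refine ⟨Finite.of_surjective φ hφ.2, Finite.of_surjective Φ hΦ.2, ?_, hinv.1 h4⟩
    intro e'
    obtain ⟨e, rfl⟩ := hΦ.2 e'
    rw [hl]; exact h3 e
  · rintro ⟨_, _, h3, h4⟩
    refine ⟨Finite.of_injective φ hφ.1, Finite.of_injective Φ hΦ.1, ?_, hinv.2 h4⟩
    intro e
    rw [← hl]; exact h3 _

theorem St.slide {G : LGraph V E} {e f : E} (hc : G.CanSlide e f) (h : St G) :
    St (G.slide e f) := by
  obtain ⟨h1, h2, h3, s, hs⟩ := hc
  have hnz := h.nz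
  have hs0 : s ≠ 0 := by
    rintro rfl; exact hnz e (by rw [hs, mul_zero])
  have hle : (G.slide e f).lab e = s * G.lab (G.bar f) := by
    simp only [LGraph.slide, if_true]
    rw [hs, mul_assoc, Int.mul_ediv_cancel_left _ (hnz f)]
  have hlg : ∀ g, g ≠ e → (G.slide e f).lab g = G.lab g := by
    intro g hg; simp [LGraph.slide, hg]
  refine ⟨h.fv, h.fe, ?_, ?_⟩
  · intro g
    by_cases hg : g = e
    · rw [hg, hle]; exact mul_ne_zero hs0 (hnz _)
    · rw [hlg g hg]; exact hnz g
  · refine (PG.inv_slide (G := G.toPG) (G' := (G.slide e f).toPG) (e := e) (f := f) (m := s.natAbs.toPNat') (fun _ => rfl) h1 h2 h3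
      ?_ ?_ ?_ ?_ ?_).1 h.inv
    · show (G.lab e).natAbs.toPNat' = s.natAbs.toPNat' * (G.lab f).natAbs.toPNat'
      rw [hs, mul_comm, toP_imul hs0 (hnz f)]
    · simp [toPG, LGraph.slide, t]
    · show ((G.slide e f).lab e).natAbs.toPNat' = _
      rw [hle, toP_imul hs0 (hnz _)]; rfl
    · intro g hg; simp [toPG, LGraph.slide, hg]
    · intro g hg; exact L_congr (hlg g hg)

theorem St.ind {G : LGraph V E} {e : E} {m : ℤ} (hloop : G.o e = G.t e) (h1 : G.lab e = 1)
    (hm : 1 ≤ m) (hd : m ∣ G.lab (G.bar e)) : St G ↔ St (G.inductionMove e m) := by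
  obtain ⟨s, hs⟩ := hd
  have hm0 : m ≠ 0 := by omega
  have hl1 : ∀ g, g ≠ e → g ≠ G.bar e → G.o g = G.o e →
      (G.inductionMove e m).lab g = m * G.lab g := by
    intro g g1 g2 g3; simp [inductionMove, g1, g2, g3]
  have hl2 : ∀ g, ¬ (g ≠ e ∧ g ≠ G.bar e ∧ G.o g = G.o e) →
      (G.inductionMove e m).lab g = G.lab g := by
    intro g hg; simp only [inductionMove]; rw [if_neg hg]
  have hnz : G.NZ ↔ (G.inductionMove e m).NZ := by
    refine forall_congr' fun g => ?_
    by_cases hg : g ≠ e ∧ g ≠ G.bar e ∧ G.o g = G.o e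
    · rw [hl1 g hg.1 hg.2.1 hg.2.2]; simp [hm0]
    · rw [hl2 g hg]
  have hinv : G.NZ → (G.toPG.Inv ↔ (G.inductionMove e m).toPG.Inv) := by
    intro hz
    have hs0 : s ≠ 0 := by
      rintro rfl; exact hz (G.bar e) (by rw [hs, mul_zero])
    have k1 : (G.inductionMove e m).lab e = G.lab e := hl2 e (by simp)
    have k2 : (G.inductionMove e m).lab (G.bar e) = G.lab (G.bar e) := hl2 _ (by simp)
    have e1 : G.toPG.L e = 1 := by
      show (G.lab e).natAbs.toPNat' = 1
      rw [h1]; rfl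
    have e2 : G.toPG.L (G.bar e) = m.natAbs.toPNat' * s.natAbs.toPNat' := by
      show (G.lab (G.bar e)).natAbs.toPNat' = _
      rw [hs, toP_imul hm0 hs0]
    refine PG.inv_ind (e := e) (m := m.natAbs.toPNat') (m' := s.natAbs.toPNat') (fun _ => rfl)
      (fun _ => rfl) hloop.symm e1 e2 ?_ ?_ ?_ ?_
    · rw [← e1]; exact L_congr k1
    · rw [← e2]; exact L_congr k2
    · intro g g1 g2 g3
      show ((G.inductionMove e m).lab g).natAbs.toPNat' = _
      rw [hl1 g g1 g2 g3, toP_imul hm0 (hz g)]; rfl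
    · intro g g1 g2 g3
      exact L_congr (hl2 g fun hh => g3 hh.2.2)
  constructor
  · rintro ⟨a, b, c, d⟩; exact ⟨a, b, hnz.1 c, (hinv c).1 d⟩
  · rintro ⟨a, b, c, d⟩; exact ⟨a, b, hnz.2 c, (hinv (hnz.2 c)).2 d⟩

theorem St.amove {G : LGraph V E} {G' : LGraph V' E'} (h : G.IsAMove G') : St G ↔ St G' := by
  obtain ⟨e, d, e', φ, Φ, h1, h2, _, h4, h5, _, _, h8, h9, h10, h11, h12, h13, h14, h15, h16, h17,
    h18⟩ := h
  have hinv : Finite V → Finite E → G.NZ → (G.toPG.Inv ↔ G'.toPG.Inv) := by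
    intro _ _ hz
    obtain ⟨s, hs⟩ := h8
    have hs0 : s ≠ 0 := by
      rintro rfl; exact hz (G.bar e) (by rw [hs, mul_zero])
    refine PG.inv_amove (G := G.toPG) (G' := G'.toPG) (e := e) (d := d) (e' := e') (φ := φ)
      (Φ := Φ) (j := s.natAbs.toPNat') h1.symm ?_ h4 h5 ?_ h9 h10 h11 (L_congr h12) ?_ h14 h15 ?_
      h17 h18
    · show (G.lab e).natAbs.toPNat' = 1
      rw [h2]; rfl
    · show (G.lab (G.bar e)).natAbs.toPNat' = _
      rw [hs, toP_imul (hz d) hs0]; rfl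
    · show (G'.lab (G'.bar e')).natAbs.toPNat' = _
      rw [h13, toP_imul (hz _) (hz _)]; rfl
    · intro g g1 g2 g3 g4
      obtain ⟨k1, k2, k3, k4, k5⟩ := h16 g g1 g2 g3 g4
      exact ⟨k1, k2, k3, k4, L_congr k5⟩
  constructor
  · rintro ⟨fv, fe, nz, inv⟩
    refine ⟨?_, ?_, ?_, (hinv fv fe nz).1 inv⟩
    · exact Finite.of_surjective φ fun v' => ⟨(h15 v').choose, (h15 v').choose_spec.2⟩
    · have hs : (Set.univ : Set E') ⊆ {e', G'.bar e'} ∪ Set.range Φ := by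
        intro y _
        by_cases y1 : y = e'
        · left; simp [y1]
        by_cases y2 : y = G'.bar e'
        · left; simp [y2]
        obtain ⟨g, _, _, _, _, hg⟩ := h18 y y1 y2
        exact Or.inr ⟨g, hg⟩
      exact Set.finite_univ_iff.1 (((Set.toFinite _).union (Set.finite_range Φ)).subset hs)
    · intro y
      by_cases y1 : y = e'
      · rw [y1, h12]; exact nz _
      by_cases y2 : y = G'.bar e'
      · rw [y2, h13]; exact mul_ne_zero (nz _) (nz _)
      obtain ⟨g, g1, g2, g3, g4, rfl⟩ := h18 y y1 y2
      rw [(h16 g g1 g2 g3 g4).2.2.2.2]; exact nz g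
  · rintro ⟨fv, fe, nz, inv⟩
    have hV : Finite V := by
      have hf : ({G.o e}ᶜ : Set V).Finite := by
        refine Set.Finite.of_finite_image (f := φ) (Set.toFinite _) ?_
        intro w hw w' hw' heq
        exact h14 w w' hw hw' heq
      have := hf.union (Set.finite_singleton (G.o e))
      rw [Set.compl_union_self] at this
      exact Set.finite_univ_iff.1 this
    have hE : Finite E := by
      have hf : ({e, G.bar e, d, G.bar d}ᶜ : Set E).Finite := by
        refine Set.Finite.of_finite_image (f := Φ) (Set.toFinite _) ?_
        intro w hw w' hw' heq
        simp only [Set.mem_compl_iff, Set.mem_insert_iff, Set.mem_singleton_iff, not_or] at hw hw'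
        exact h17 w w' hw.1 hw.2.1 hw.2.2.1 hw.2.2.2 hw'.1 hw'.2.1 hw'.2.2.1 hw'.2.2.2 heq
      have := hf.union (Set.toFinite {e, G.bar e, d, G.bar d})
      rw [Set.compl_union_self] at this
      exact Set.finite_univ_iff.1 this
    have hdb : G.lab (G.bar d) ≠ 0 := by rw [← h12]; exact nz _
    have heb : G.lab (G.bar e) ≠ 0 := by
      have := nz (G'.bar e')
      rw [h13] at this
      exact right_ne_zero_of_mul this
    have hd : G.lab d ≠ 0 := fun h0 => heb (by rw [h0] at h8; exact zero_dvd_iff.1 h8)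
    have hz : G.NZ := by
      intro g
      by_cases g1 : g = e
      · rw [g1, h2]; exact one_ne_zero
      by_cases g2 : g = G.bar e
      · rw [g2]; exact heb
      by_cases g3 : g = d
      · rw [g3]; exact hd
      by_cases g4 : g = G.bar d
      · rw [g4]; exact hdb
      rw [← (h16 g g1 g2 g3 g4).2.2.2.2]; exact nz _
    exact ⟨hV, hE, hz, (hinv hV hE hz).2 inv⟩

theorem St.move {X Y : BGraph} (h : X.ElemMove Y) (hX : St X.G) : St Y.G := by
  rcases h with ⟨e, f, hc, hi⟩ | ⟨e, m, h1, h2, h3, h4, hi⟩ | ⟨e, m, h1, h2, h3, h4, hi⟩ | h | h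
  · exact (St.isom hi).2 (hX.slide hc)
  · exact (St.isom hi).2 ((St.ind h1 h2 h3 h4).1 hX)
  · exact (St.ind h1 h2 h3 h4).2 ((St.isom hi).1 hX)
  · exact (St.amove h).1 hX
  · exact (St.amove h).2 hX

theorem St.seq {X Y : BGraph} (h : BGraph.MoveSeq X Y) (hX : St X.G) : St Y.G := by
  induction h with
  | refl => exact hX
  | tail _ hs ih => exact ih.move hs.1

theorem St.smc {G : LGraph V E} (h : St G) : G.HasStrictMonotoneCycle := by
  have := h.fv
  have := h.fe
  obtain ⟨e, k, hk, hR⟩ := h.inv.smc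
  obtain ⟨l, hl⟩ := smc_of_R h.nz hk hR
  exact ⟨l, e, hl⟩

end moves
end LGraph

namespace PG
section init
variable {V E : Type} {G : PG V E}

theorem PP.four {f : E} (h : G.PP (G.x f)) : ∃ k : ℕ+, k ≠ 1 ∧
    (G.R (G.del f) (G.x f) (sm k (G.x f)) ∨
     G.R (G.del f) (G.x (G.bar f)) (sm k (G.x (G.bar f))) ∨
     G.R (G.del f) (G.x (G.bar f)) (sm k (G.x f)) ∨
     G.R (G.del f) (G.x f) (sm k (G.x (G.bar f)))) := by
  by_contra hc
  push Not at hc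
  have key : ∀ q, G.R Set.univ (G.x f) q →
      G.R (G.del f) (G.x f) q ∨ G.R (G.del f) (G.x (G.bar f)) q := by
    intro q hq
    induction hq with
    | refl => exact Or.inl (R.refl _)
    | tail _ hs ih =>
      obtain ⟨g, _, j, rfl, rfl⟩ := hs
      by_cases hg : g ∈ G.del f
      · rcases ih with ih | ih
        · exact Or.inl (ih.tail ⟨g, hg, j, rfl, rfl⟩)
        · exact Or.inr (ih.tail ⟨g, hg, j, rfl, rfl⟩)
      · have hj : j = 1 := by
          by_contra hj
          obtain ⟨h1, h2, h3, h4⟩ := hc j hj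
          rcases not_del hg with rfl | rfl <;> rcases ih with ih | ih
          exacts [h1 ih, h3 ih, h4 ih, h2 ih]
        subst hj
        rw [sm_one]
        rcases not_del hg with rfl | rfl
        · exact Or.inr (R.refl _)
        · rw [G.bar_bar]; exact Or.inl (R.refl _)
  obtain ⟨k, hk, hR⟩ := h
  obtain ⟨h1, h2, h3, h4⟩ := hc k hk
  rcases key _ hR with h | h
  exacts [h1 h, h3 h]

theorem loop_rat {g : E} {S : Set E} (hS : ∀ f ∈ S, f = g ∨ f = G.bar g) {p q : V × ℕ+}
    (h : G.R S p q) : ∃ n : ℤ, ((q.2 : ℕ) : ℚ) =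
      (p.2 : ℕ) * (((G.L (G.bar g) : ℕ) : ℚ) / ((G.L g : ℕ) : ℚ)) ^ n := by
  have hA : ((G.L g : ℕ) : ℚ) ≠ 0 := by exact_mod_cast (G.L g).ne_zero
  have hB : ((G.L (G.bar g) : ℕ) : ℚ) ≠ 0 := by exact_mod_cast (G.L (G.bar g)).ne_zero
  have hr : (((G.L (G.bar g) : ℕ) : ℚ) / ((G.L g : ℕ) : ℚ)) ≠ 0 := div_ne_zero hB hA
  induction h with
  | refl => exact ⟨0, by simp⟩
  | tail _ hs ih =>
    obtain ⟨f, hf, j, rfl, rfl⟩ := hs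
    obtain ⟨n, hn⟩ := ih
    simp only [sm, x, PNat.mul_coe, Nat.cast_mul] at hn ⊢
    rcases hS f hf with rfl | rfl
    · refine ⟨n + 1, ?_⟩
      rw [zpow_add_one₀ hr, ← mul_assoc, ← hn]
      field_simp
    · refine ⟨n - 1, ?_⟩
      rw [zpow_sub_one₀ hr, ← mul_assoc, ← hn, G.bar_bar]
      field_simp

theorem loop_int {A B k n : ℕ} (hn : n ≠ 0) (h : B ^ n = k * A ^ n) : A ∣ B :=
  (Nat.pow_dvd_pow_iff hn).1 (Dvd.intro_left _ h.symm)

theorem PP_of_dvd [Subsingleton V] {g : E} (h : G.L g ∣ G.L (G.bar g))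
    (hne : G.L (G.bar g) ≠ G.L g) : G.PP (G.x g) := by
  obtain ⟨s, hs⟩ := h
  refine ⟨s, ?_, ?_⟩
  · rintro rfl; rw [mul_one] at hs; exact hne hs
  · have : sm s (G.x g) = G.x (G.bar g) := by
      refine Prod.ext (Subsingleton.elim _ _) ?_
      simp [sm, x, hs, mul_comm]
    rw [this]; exact R.bar

theorem loop_PP [Subsingleton V] {g : E} {S : Set E} (hS : ∀ f ∈ S, f = g ∨ f = G.bar g)
    {p : V × ℕ+} {k : ℕ+} (hk : k ≠ 1) (h : G.R S p (sm k p)) : G.PP (G.x g) := by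
  obtain ⟨n, hn⟩ := loop_rat hS h
  have hA : ((G.L g : ℕ) : ℚ) ≠ 0 := by exact_mod_cast (G.L g).ne_zero
  have hB : ((G.L (G.bar g) : ℕ) : ℚ) ≠ 0 := by exact_mod_cast (G.L (G.bar g)).ne_zero
  have hp : ((p.2 : ℕ) : ℚ) ≠ 0 := by exact_mod_cast p.2.ne_zero
  simp only [sm, PNat.mul_coe, Nat.cast_mul] at hn
  rw [mul_comm] at hn
  have hn := mul_left_cancel₀ hp hn
  have hk1 : ((k : ℕ) : ℚ) ≠ 1 := by
    intro hh; apply hk; apply PNat.coe_inj.1; exact_mod_cast hh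
  have hne : G.L (G.bar g) ≠ G.L g := by
    intro hh
    rw [hh, div_self hA, one_zpow] at hn
    exact hk1 hn
  have hn0 : n ≠ 0 := by rintro rfl; simp at hn; exact hk1 (by exact_mod_cast hn)
  obtain ⟨m, rfl | rfl⟩ := n.eq_nat_or_neg
  · have hm : m ≠ 0 := by rintro rfl; simp at hn0
    rw [zpow_natCast, div_pow, eq_div_iff (pow_ne_zero _ hA)] at hn
    have hn' : (G.L (G.bar g) : ℕ) ^ m = k * (G.L g : ℕ) ^ m := by exact_mod_cast hn.symm
    exact PP_of_dvd (PNat.dvd_iff.2 (loop_int hm hn')) hne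
  · have hm : m ≠ 0 := by rintro rfl; simp at hn0
    rw [zpow_neg, zpow_natCast, div_pow, inv_div, eq_div_iff (pow_ne_zero _ hB)] at hn
    have hn' : (G.L g : ℕ) ^ m = k * (G.L (G.bar g) : ℕ) ^ m := by exact_mod_cast hn.symm
    have h1 : G.PP (G.x (G.bar g)) := by
      apply PP_of_dvd
      · rw [G.bar_bar]; exact PNat.dvd_iff.2 (loop_int hm hn')
      · rw [G.bar_bar]; exact hne.symm
    exact h1.up R.bar.ge

theorem init_A [Subsingleton V] [Finite E] {e0 : E} {k0 : ℕ+} (hk0 : k0 ≠ 1)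
    (hR : G.R (G.del e0) (G.x (G.bar e0)) (sm k0 (G.x e0)))
    (hA : ∀ f, G.PP (G.x f) → f = e0 ∨ f = G.bar e0) : Inv G := by
  have hpp : G.PP (G.x e0) := ⟨k0, hk0, R.bar.trans (hR.mono (Set.subset_univ _))⟩
  by_cases hv : G.ge Set.univ (G.o e0, 1) (G.x e0)
  · left
    refine ⟨G.x e0, hpp, fun p _ _ k hk => ?_⟩
    have := D_free (by rwa [Subsingleton.elim p.1 (G.o e0)]) hk
    exact sm_inj (this.trans (sm_one _).symm)
  · right
    have hsub : G.del e0 ∩ {e | G.ge Set.univ (G.x e0) (G.x e)} ⊆ G.D (G.x e0) := by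
      rintro e ⟨h1, h2⟩
      refine ⟨h2, fun h3 => ?_⟩
      rcases hA e (hpp.up h3) with h | h
      exacts [h1.1 h, h1.2 h]
    have hdown : G.ge (G.D (G.x e0)) (G.x (G.bar e0)) (G.x e0) :=
      ⟨k0, (restrict hR R.bar.ge).1.mono hsub⟩
    have hsub' : Set.univ ∩ G.del e0 ∩ {e | G.ge Set.univ (G.x e0) (G.x e)} ⊆ G.D (G.x e0) :=
      fun e he => hsub ⟨he.1.2, he.2⟩
    refine ⟨G.x e0, G.x e0, ⟨hpp, ge.refl _, ge.refl _, hv, ?_⟩, ?_⟩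
    · intro p ⟨k, hk⟩ hcp _
      rcases first_cross_one e0 hk with h | ⟨g, hg, m, h⟩
      · exact ⟨k, (restrict h hcp).1.mono hsub'⟩
      · have h' : G.ge (G.D (G.x e0)) p (G.x g) := ⟨m, (restrict h hcp).1.mono hsub'⟩
        rcases hg with rfl | rfl
        · exact h'
        · exact h'.trans hdown
    · have h1 : G.VC (G.x e0) = ∅ := by
        ext w
        simp only [Set.mem_empty_iff_false, iff_false]
        intro hw
        apply hv
        rw [Subsingleton.elim (G.o e0) w]
        exact hw.2
      unfold cnt
      rw [h1, Set.ncard_empty, mul_zero, Set.ncard_pos]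
      exact ⟨e0, ge.refl _, ge.refl _⟩

theorem init_B [Subsingleton V] [Finite E] (hcard : Nat.card E ≤ 6) {e0 f : E}
    (h0 : G.PP (G.x e0)) (hf : G.PP (G.x f)) (hf0 : f ∈ G.del e0) : Inv G := by
  have hbarPP : ∀ g, G.PP (G.x g) → G.PP (G.x (G.bar g)) := fun g h => h.up R.bar'.ge
  obtain ⟨e, he, hmin⟩ := Set.exists_min_image {e | G.PP (G.x e)}
    (fun e => {g | G.ge Set.univ (G.x e) (G.x g)}.ncard) (Set.toFinite _) ⟨e0, h0⟩
  have hD : ∀ g ∈ G.D (G.x e), ¬ G.PP (G.x g) := by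
    intro g hg hP
    have hlt : {h | G.ge Set.univ (G.x g) (G.x h)}.ncard <
        {h | G.ge Set.univ (G.x e) (G.x h)}.ncard := by
      refine Set.ncard_lt_ncard ⟨fun h hh => hg.1.trans hh, fun hs => ?_⟩ (Set.toFinite _)
      exact hg.2 (hs (ge.refl (G.x e)))
    exact absurd (hmin g hP) (not_le.2 hlt)
  left
  refine ⟨G.x e, he, fun p _ _ k hk => ?_⟩
  by_contra hk1
  by_cases hne : ∃ g, g ∈ G.D (G.x e)
  · obtain ⟨g, hg⟩ := hne
    refine hD g hg (loop_PP (g := g) ?_ hk1 hk)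
    intro h hh
    by_contra hc
    push Not at hc
    have hnP := hD g hg
    have hnP2 := hD _ (bc_D _ g hg)
    have hnP3 := hD h hh
    have b0 := hbarPP e0 h0
    have b1 := hbarPP f hf
    classical
    have : Fintype E := Fintype.ofFinite E
    have hc7 : ({e0, G.bar e0, f, G.bar f, g, G.bar g, h} : Finset E).card = 7 := by
      have n1 : ∀ a b, G.PP (G.x a) → ¬ G.PP (G.x b) → a ≠ b := by
        rintro a b h1 h2 rfl; exact h2 h1
      have e1 : e0 ≠ G.bar e0 := (G.bar_ne e0).symm
      have e2 : f ≠ G.bar f := (G.bar_ne f).symm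
      have e3 : g ≠ G.bar g := (G.bar_ne g).symm
      have e4 : e0 ≠ f := hf0.1.symm
      have e5 : G.bar e0 ≠ f := hf0.2.symm
      have e6 : e0 ≠ G.bar f := fun hh => hf0.2 (by rw [hh, G.bar_bar])
      have e7 : G.bar e0 ≠ G.bar f := fun hh => e4 (bar_inj hh)
      have := n1 e0 g h0 hnP
      have := n1 e0 _ h0 hnP2
      have := n1 e0 _ h0 hnP3
      have := n1 _ g b0 hnP
      have := n1 _ _ b0 hnP2
      have := n1 _ _ b0 hnP3
      have := n1 f g hf hnP
      have := n1 f _ hf hnP2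
      have := n1 f _ hf hnP3
      have := n1 _ g b1 hnP
      have := n1 _ _ b1 hnP2
      have := n1 _ _ b1 hnP3
      have := hc.1.symm
      have := hc.2.symm
      simp [*]
    have := Finset.card_le_univ ({e0, G.bar e0, f, G.bar f, g, G.bar g, h} : Finset E)
    rw [hc7, ← Nat.card_eq_fintype_card] at this
    omega
  · push Not at hne
    have hD0 : G.D (G.x e) = ∅ := Set.eq_empty_iff_forall_notMem.2 hne
    rw [hD0] at hk
    have : ∀ q, G.R ∅ p q → q = p := by
      intro q hq
      cases hq with
      | refl => rfl
      | tail _ hs => obtain ⟨g, hg, _⟩ := hs; exact absurd hg (Set.notMem_empty g)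
    exact hk1 (sm_inj ((this _ hk).trans (sm_one _).symm))

end init
end PG

theorem LGraph.mobile_of_PP {V E : Type} {G : LGraph V E} (h : G.NZ) {f : E}
    (hf : G.toPG.PP (G.toPG.x f)) : G.Mobile f := by
  obtain ⟨k, hk, h1 | h1 | h1 | h1⟩ := hf.four
  · obtain ⟨l, hl⟩ := int_of_R h hk h1
    exact Or.inr ⟨l, Or.inl hl⟩
  · rw [← PG.del_bar] at h1
    obtain ⟨l, hl⟩ := int_of_R h hk h1
    exact Or.inr ⟨l, Or.inr hl⟩
  · obtain ⟨l, hl⟩ := smc_of_R h hk h1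
    exact Or.inl ⟨l, Or.inl hl⟩
  · rw [← PG.del_bar] at h1
    have h2 : G.toPG.R (G.toPG.del (G.bar f)) (G.toPG.x (G.bar (G.bar f)))
        (PG.sm k (G.toPG.x (G.bar f))) := by
      rw [G.bar_bar]; exact h1
    obtain ⟨l, hl⟩ := smc_of_R h hk h2
    exact Or.inl ⟨l, Or.inr hl⟩

theorem stmt18 {V E : Type} [Finite V] [Finite E] (G : LGraph V E) (n : ℕ)
    (hrose : G.IsRose n) (hpos : G.Positive)
    (hcond : (∃ e : E, G.Mobile e ∧ ∀ x : E, G.Mobile x → x = e ∨ x = G.bar e) ∨ n ≤ 3)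
    (hsmc : G.HasStrictMonotoneCycle)
    (Y : BGraph) (hseq : BGraph.MoveSeq ⟨V, E, G⟩ Y) :
    Y.G.HasStrictMonotoneCycle := by
  have hnz : G.NZ := fun e => (hpos e).ne'
  obtain ⟨l, e0, hl⟩ := hsmc
  obtain ⟨k0, hk0, hR⟩ := LGraph.R_of_smc hpos hl
  have hsub : Subsingleton V := (Nat.card_eq_one_iff_unique.1 hrose.1).1
  have hinv : G.toPG.Inv := by
    by_cases hA : ∀ f, G.toPG.PP (G.toPG.x f) → f = e0 ∨ f = G.bar e0
    · exact PG.init_A hk0 hR hA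
    · push Not at hA
      obtain ⟨f, hf, hf0⟩ := hA
      have h0 : G.toPG.PP (G.toPG.x e0) :=
        ⟨k0, hk0, PG.R.bar.trans (hR.mono (Set.subset_univ _))⟩
      rcases hcond with ⟨e, _, he⟩ | hn
      · exfalso
        have m0 := he _ (LGraph.mobile_of_PP hnz h0)
        have m1 := he _ (LGraph.mobile_of_PP hnz hf)
        have hb := G.bar_bar e
        rcases m0 with rfl | rfl <;> rcases m1 with rfl | rfl
        · exact hf0.1 rfl
        · exact hf0.2 rfl
        · exact hf0.2 hb.symm
        · exact hf0.1 rfl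
      · refine PG.init_B ?_ h0 hf hf0
        rw [hrose.2]; omega
  have hSt : LGraph.St (BGraph.mk V E G).G := ⟨inferInstance, inferInstance, hnz, hinv⟩
  exact (LGraph.St.seq hseq hSt).smc
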